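/- arXiv:1502.02258 — 2 statements merged into one kernel-verified Lean document; each statement's English description precedes it below -/
import Mathlib

section
/- Let f : ℝ → ℂ be Bohr almost periodic with Fourier coefficient function \hat f. Suppose (ω_m)_{m ∈ ℕ} is an injective sequence of real numbers such that \hat f(ω′) = 0 for every ω′ not in the range of (ω_m), and suppose the partial sums S_N(x) := ∑_{m=0}^{N} \hat f(ω_m) e^{2πiω_m x} converge uniformly on ℝ to a function g as N → ∞. Then g(x) = f(x) for all x ∈ ℝ. -/
/-!
By linearity the difference `h = f - g` has vanishing Fourier coefficients at every frequency: for
each `ω` the coefficient of `f - S_N` at `ω` is zero once `N` is large, since the `ω_m` are distinct,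
and `f - S_N` converges uniformly to `h`. Moreover `h` is Bohr almost periodic; sums of almost
periodic functions are handled through Bochner's criterion (`TB`, total boundedness of the set of
translates). It remains to prove the uniqueness theorem: an almost periodic `h` whose Fourier
coefficients all vanish is zero.

The argument is that of de la Vallée Poussin.

* The means `T⁻¹ ∫ₐ^{a+T} h(x) e^{2πiωx} dx` tend to zero uniformly in `ω` and `a` (`unif_all`).
* Let `T` be a large almost period of `h`, and let `u` be the `T`-periodic function that agrees with
  `h` on `(0, T]`. The autocorrelation of `u` has Fourier coefficients `|û(n)|²`, so by Parseval its
  quadratic mean is `∑ |û(n)|⁴ ≤ (sup |û|)² ∑ |û(n)|²` (`integral_acorr_le`), which is small. Since `T`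
  is an almost period, the autocorrelation of `u` is uniformly close to
  `corr h T x = T⁻¹ ∫₀ᵀ h(x + t) conj(h(t)) dt`, so the latter has small quadratic mean as well
  (`integral_corr_le`).
* If `h ≠ 0`, then `corr h T 0 = T⁻¹ ∫₀ᵀ |h|²` is bounded below (`lower_bound`). The functions
  `corr h T` inherit the almost periods and the modulus of continuity of `h` uniformly in `T`, so by
  `lower_bound` again their quadratic means are bounded below independently of `T`, a contradiction.
-/

open MeasureTheory Filter Topology
open scoped ENNReal NNReal

noncomputable section

/-- `f : ℝ → ℂ` is Bohr almost periodic. -/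
def BohrAP (f : ℝ → ℂ) : Prop :=
  Continuous f ∧ ∀ ε : ℝ, 0 < ε → ∃ L : ℝ, 0 < L ∧ ∀ a : ℝ,
    ∃ τ, τ ∈ Set.Icc a (a + L) ∧ ∀ x : ℝ, ‖f (x - τ) - f x‖ < ε

/-- The Fourier coefficient of `f` at frequency `ω` equals `c`. -/
def HasFourierCoeff (f : ℝ → ℂ) (ω : ℝ) (c : ℂ) : Prop :=
  Tendsto (fun L : ℝ => (2 * (L : ℂ))⁻¹ *
      ∫ x in (-L)..L, f x * Complex.exp (((-(2 * Real.pi * ω * x) : ℝ) : ℂ) * Complex.I))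
    atTop (nhds c)

/-- `f'` is a weak derivative of `f` on `ℝ`. -/
def HasWeakDeriv (f f' : ℝ → ℂ) : Prop :=
  LocallyIntegrable f' volume ∧ ∀ x : ℝ, f x = f 0 + ∫ y in (0:ℝ)..x, f' y

/-- The `S^{1,2}(ℝ)`-norm of `f` (with weak derivative `f'`), valued in `ℝ≥0∞`. -/
def S12 (f f' : ℝ → ℂ) : ℝ≥0∞ :=
  ⨆ y : ℝ, (∫⁻ x in Set.Ioc y (y + 1),
    ((‖f x‖₊ : ℝ≥0∞) ^ 2 + (‖f' x‖₊ : ℝ≥0∞) ^ 2)) ^ (1/2 : ℝ)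

/-- The averaging operator `A_{n,L}[f]`. -/
def avgOp (f : ℝ → ℂ) (L : ℝ) (n : ℕ) (x : ℝ) : ℂ :=
  (n : ℂ)⁻¹ * ∑ m ∈ Finset.range n, f (x + m * L)

/-- `f` is limit periodic: a uniform limit of continuous periodic functions. -/
def LimitPeriodic (f : ℝ → ℂ) : Prop :=
  ∃ g : ℕ → ℝ → ℂ, (∀ j, Continuous (g j)) ∧
    (∀ j, ∃ P : ℝ, 0 < P ∧ Function.Periodic (g j) P) ∧
    TendstoUniformly g f atTop

namespace APUniq

/-! ### Characters -/

/-- The character `e^{2πiωx}`. -/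
def ex (ω x : ℝ) : ℂ := Complex.exp (((2 * Real.pi * ω * x : ℝ) : ℂ) * Complex.I)

@[simp] lemma norm_ex (ω x : ℝ) : ‖ex ω x‖ = 1 := Complex.norm_exp_ofReal_mul_I _

lemma ex_continuous (ω : ℝ) : Continuous (ex ω) := by
  unfold ex; fun_prop

lemma ex_add (ω x y : ℝ) : ex ω (x + y) = ex ω x * ex ω y := by
  unfold ex
  rw [← Complex.exp_add]; congr 1; push_cast; ring

lemma ex_add_freq (ω ν x : ℝ) : ex (ω + ν) x = ex ω x * ex ν x := by
  unfold ex
  rw [← Complex.exp_add]; congr 1; push_cast; ring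

lemma ex_zero_freq (x : ℝ) : ex 0 x = 1 := by simp [ex]

lemma ex_one_div {ω : ℝ} (hω : ω ≠ 0) : ex ω (1 / ω) = 1 := by
  unfold ex
  rw [Complex.exp_eq_one_iff]
  refine ⟨1, ?_⟩
  rw [mul_assoc (2 * Real.pi) ω, mul_one_div_cancel hω]
  push_cast; ring

lemma norm_ex_sub_one_le (ω x : ℝ) : ‖ex ω x - 1‖ ≤ 2 * Real.pi * |ω| * |x| := by
  unfold ex
  rw [mul_comm]
  refine (Real.norm_exp_I_mul_ofReal_sub_one_le).trans ?_
  rw [Real.norm_eq_abs, abs_mul, abs_mul, abs_of_pos Real.two_pi_pos]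

/-! ### Almost periodic functions -/

lemma unifCont {f : ℝ → ℂ} (hf : BohrAP f) {ε : ℝ} (hε : 0 < ε) :
    ∃ δ : ℝ, 0 < δ ∧ ∀ x y, |x - y| ≤ δ → ‖f x - f y‖ ≤ ε := by
  obtain ⟨L, hL, hτ⟩ := hf.2 (ε / 3) (by positivity)
  have huc : UniformContinuousOn f (Set.Icc (-1) (L + 1)) :=
    isCompact_Icc.uniformContinuousOn_of_continuous hf.1.continuousOn
  obtain ⟨δ, hδ, h⟩ := Metric.uniformContinuousOn_iff.1 huc (ε / 3) (by positivity)
  refine ⟨min (δ / 2) 1, by positivity, fun x y hxy => ?_⟩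
  obtain ⟨τ, ⟨h1, h2⟩, h3⟩ := hτ (x - L)
  have hx1 : |x - y| ≤ δ / 2 := hxy.trans (min_le_left _ _)
  have hx2 := abs_le.1 (hxy.trans (min_le_right _ _))
  have key := h (x - τ) ⟨by linarith, by linarith⟩ (y - τ) ⟨by linarith, by linarith⟩
    (by rw [Real.dist_eq, sub_sub_sub_cancel_right]; linarith)
  rw [dist_eq_norm] at key
  have e : f x - f y = (f (x - τ) - f (y - τ)) - (f (x - τ) - f x) + (f (y - τ) - f y) := by ring
  rw [e]
  refine (norm_add_le _ _).trans ?_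
  have := norm_sub_le (f (x - τ) - f (y - τ)) (f (x - τ) - f x)
  linarith [h3 x, h3 y]

lemma bdd {f : ℝ → ℂ} (hf : BohrAP f) : ∃ C : ℝ, 0 < C ∧ ∀ x, ‖f x‖ ≤ C := by
  obtain ⟨L, hL, hτ⟩ := hf.2 1 one_pos
  obtain ⟨C, hC⟩ := (isCompact_Icc (a := (0 : ℝ)) (b := L)).exists_bound_of_continuousOn
    hf.1.continuousOn
  have hC0 : 0 ≤ C := (norm_nonneg _).trans (hC 0 ⟨le_rfl, hL.le⟩)
  refine ⟨C + 1, by linarith, fun x => ?_⟩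
  obtain ⟨τ, ⟨h1, h2⟩, h3⟩ := hτ (x - L)
  have := hC (x - τ) ⟨by linarith, by linarith⟩
  have e : f x = f (x - τ) - (f (x - τ) - f x) := by ring
  rw [e]
  refine (norm_sub_le _ _).trans ?_
  linarith [h3 x]

/-- The translates of `f` are totally bounded in the sup norm (Bochner's criterion). It is phrased
with colourings: for each `ε`, finitely many colours suffice to colour the shifts `b` in such a way
that shifts of equal colour give `ε`-close translates. In this form two functions are treated
simultaneously by taking the product colouring. -/
def TB (f : ℝ → ℂ) : Prop :=
  ∀ ε : ℝ, 0 < ε → ∃ (ι : Type) (_ : Finite ι) (c : ℝ → ι),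
    ∀ b b', c b = c b' → ∀ x, ‖f (x + b) - f (x + b')‖ ≤ ε

lemma TB.sub {f g : ℝ → ℂ} (hf : TB f) (hg : TB g) : TB (fun x => f x - g x) := by
  intro ε hε
  obtain ⟨ι, _, c, hc⟩ := hf (ε / 2) (by positivity)
  obtain ⟨κ, _, d, hd⟩ := hg (ε / 2) (by positivity)
  refine ⟨ι × κ, inferInstance, fun b => (c b, d b), fun b b' h x => ?_⟩
  obtain ⟨h1, h2⟩ := Prod.mk.inj h
  have e : f (x + b) - g (x + b) - (f (x + b') - g (x + b'))
    = (f (x + b) - f (x + b')) - (g (x + b) - g (x + b')) := by ring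
  rw [e]
  refine (norm_sub_le _ _).trans ?_
  linarith [hc b b' h1 x, hd b b' h2 x]

lemma TB.of_approx {f : ℝ → ℂ}
    (h : ∀ ε : ℝ, 0 < ε → ∃ p : ℝ → ℂ, TB p ∧ ∀ x, ‖f x - p x‖ ≤ ε) : TB f := by
  intro ε hε
  obtain ⟨p, hp, hfp⟩ := h (ε / 3) (by positivity)
  obtain ⟨ι, hι, c, hc⟩ := hp (ε / 3) (by positivity)
  refine ⟨ι, hι, c, fun b b' hb x => ?_⟩
  have e : f (x + b) - f (x + b') = (f (x + b) - p (x + b)) + (p (x + b) - p (x + b'))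
    - (f (x + b') - p (x + b')) := by ring
  rw [e]
  refine (norm_sub_le _ _).trans ?_
  have := norm_add_le (f (x + b) - p (x + b)) (p (x + b) - p (x + b'))
  linarith [hfp (x + b), hfp (x + b'), hc b b' hb x]

lemma TB.of_bohr {f : ℝ → ℂ} (hf : BohrAP f) : TB f := by
  intro ε hε
  obtain ⟨δ, hδ, hδ'⟩ := unifCont hf (show 0 < ε / 3 by positivity)
  obtain ⟨L, hL, hτ⟩ := hf.2 (ε / 3) (by positivity)
  have hτ' : ∀ b : ℝ, ∃ r, r ∈ Set.Icc 0 L ∧ ∀ x, ‖f (x + r) - f (x + b)‖ ≤ ε / 3 := by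
    intro b
    obtain ⟨τ, ⟨h1, h2⟩, h3⟩ := hτ (b - L)
    refine ⟨b - τ, ⟨by linarith, by linarith⟩, fun x => ?_⟩
    have := (h3 (x + b)).le
    rwa [add_sub_assoc] at this
  -- each shift is equivalent to some `r b ∈ [0, L]`; the colour of `b` is the cell of `r b` in a
  -- grid of mesh `δ`
  choose r hr hr' using hτ'
  refine ⟨Set.Icc (0 : ℤ) ⌊L / δ⌋, inferInstance,
    fun b => ⟨⌊r b / δ⌋, Int.floor_nonneg.2 (div_nonneg (hr b).1 hδ.le),
      Int.floor_le_floor (by gcongr; exact (hr b).2)⟩, fun b b' hb x => ?_⟩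
  have h1 := Int.abs_sub_lt_one_of_floor_eq_floor (Subtype.mk.inj hb)
  rw [← sub_div, abs_div, abs_of_pos hδ, div_lt_one hδ] at h1
  have h2 := hδ' (x + r b) (x + r b') (by rw [add_sub_add_left_eq_sub]; exact h1.le)
  have e : f (x + b) - f (x + b') = (f (x + r b) - f (x + r b')) - (f (x + r b) - f (x + b))
    + (f (x + r b') - f (x + b')) := by ring
  rw [e]
  refine (norm_add_le _ _).trans ?_
  have := norm_sub_le (f (x + r b) - f (x + r b')) (f (x + r b) - f (x + b))
  linarith [hr' b x, hr' b' x]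

lemma TB.bohr {f : ℝ → ℂ} (hf : TB f) (hc : Continuous f) : BohrAP f := by
  refine ⟨hc, fun ε hε => ?_⟩
  obtain ⟨ι, _, c, h⟩ := hf (ε / 2) (by positivity)
  -- one representative of each colour; these are finitely many, hence bounded by some `R`
  have hfin : (Set.range fun i : Set.range c => |i.2.choose|).Finite := Set.finite_range _
  obtain ⟨R, hR⟩ := hfin.bddAbove
  have hR' : ∀ b, ∃ a, |a| ≤ R ∧ c a = c b := fun b =>
    ⟨_, hR ⟨⟨c b, b, rfl⟩, rfl⟩, (⟨b, rfl⟩ : ∃ y, c y = c b).choose_spec⟩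
  have hR0 : 0 ≤ R := by
    obtain ⟨a, ha, -⟩ := hR' 0
    exact (abs_nonneg a).trans ha
  refine ⟨2 * R + 1, by linarith, fun s => ?_⟩
  obtain ⟨a, ha, hca⟩ := hR' (s + R)
  have ha' := abs_le.1 ha
  refine ⟨s + R - a, ⟨by linarith, by linarith⟩, fun x => ?_⟩
  have := h _ _ hca (x - (s + R))
  rw [sub_add_cancel] at this
  rw [show x - (s + R - a) = x - (s + R) + a by ring]
  linarith

lemma bohr_ex (c : ℂ) (ω : ℝ) : BohrAP (fun x => c * ex ω x) := by
  refine ⟨continuous_const.mul (ex_continuous ω), fun ε hε => ?_⟩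
  rcases eq_or_ne ω 0 with rfl | hω
  · exact ⟨1, one_pos, fun a => ⟨a, ⟨le_rfl, by linarith⟩, fun x => by simpa [ex_zero_freq]⟩⟩
  have hper : Function.Periodic (ex ω) (1 / ω) := fun x => by rw [ex_add, ex_one_div hω, mul_one]
  have hP : 0 < |1 / ω| := abs_pos.2 (one_div_ne_zero hω)
  have hper' : Function.Periodic (ex ω) |1 / ω| := by
    rcases abs_choice (1 / ω) with h | h <;> rw [h]
    · exact hper
    · exact hper.neg
  refine ⟨|1 / ω|, hP, fun a => ⟨⌈a / |1 / ω|⌉ * |1 / ω|, ⟨?_, ?_⟩, fun x => ?_⟩⟩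
  · have := Int.le_ceil (a / |1 / ω|)
    rwa [div_le_iff₀ hP] at this
  · have := (Int.ceil_lt_add_one (a / |1 / ω|)).le
    calc _ ≤ (a / |1 / ω| + 1) * |1 / ω| := by gcongr
      _ = _ := by field_simp
  · simp only [hper'.sub_int_mul_eq]; simpa

lemma TB.sum {ι : Type*} (s : Finset ι) (c : ι → ℂ) (ω : ι → ℝ) :
    TB (fun x => ∑ m ∈ s, c m * ex (ω m) x) := by
  classical
  induction s using Finset.induction_on with
  | empty =>
    exact fun ε hε => ⟨Unit, inferInstance, fun _ => (), fun _ _ _ _ => by simpa using hε.le⟩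
  | insert a s ha ih =>
    -- `p + q` is written as `p - (-q)`, so that one closure lemma suffices
    have := ih.sub (TB.of_bohr (bohr_ex (-c a) (ω a)))
    convert this using 2 with x
    rw [Finset.sum_insert ha]; ring

/-! ### Mean values -/

lemma integral_ex {μ : ℝ} (hμ : μ ≠ 0) (a b : ℝ) :
    ∫ x in a..b, ex μ x = (ex μ b - ex μ a) / (2 * Real.pi * μ * Complex.I) := by
  have hc : (2 * Real.pi * μ * Complex.I : ℂ) ≠ 0 := by
    have := Real.pi_ne_zero
    simp [hμ]
  have e : ∀ x, ex μ x = Complex.exp (2 * Real.pi * μ * Complex.I * x) := fun x => by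
    unfold ex; congr 1; push_cast; ring
  simp only [e]
  exact integral_exp_mul_complex hc

lemma hfc_iff {f : ℝ → ℂ} {ω : ℝ} {c : ℂ} : HasFourierCoeff f ω c ↔
    Tendsto (fun L : ℝ => (2 * (L : ℂ))⁻¹ * ∫ x in (-L)..L, f x * ex (-ω) x) atTop (𝓝 c) := by
  have : ∀ x, Complex.exp (((-(2 * Real.pi * ω * x) : ℝ) : ℂ) * Complex.I) = ex (-ω) x := by
    intro x; unfold ex; congr 3; ring
  simp only [HasFourierCoeff, this]

lemma hfc_ex (c : ℂ) (ν ω : ℝ) :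
    HasFourierCoeff (fun x => c * ex ν x) ω (if ν = ω then c else 0) := by
  rw [hfc_iff]
  have e : ∀ x, c * ex ν x * ex (-ω) x = c * ex (ν - ω) x := fun x => by
    rw [sub_eq_add_neg, ex_add_freq, mul_assoc]
  simp only [e, intervalIntegral.integral_const_mul]
  split_ifs with h
  · subst h
    refine tendsto_const_nhds.congr' ?_
    filter_upwards [eventually_gt_atTop 0] with L hL
    have : (L : ℂ) ≠ 0 := by exact_mod_cast hL.ne'
    simp only [sub_self, ex_zero_freq, intervalIntegral.integral_const, sub_neg_eq_add]
    rw [Complex.real_smul]; push_cast; field_simp; ring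
  · have hμ : ν - ω ≠ 0 := sub_ne_zero.2 h
    refine squeeze_zero_norm' (a := fun L : ℝ =>
      L⁻¹ * (‖c‖ * (2 / ‖(2 * Real.pi * (ν - ω : ℝ) * Complex.I : ℂ)‖))) ?_ ?_
    · filter_upwards [eventually_gt_atTop 0] with L hL
      rw [integral_ex hμ, norm_mul, norm_mul, norm_div]
      have h1 : ‖(2 * (L : ℂ))⁻¹‖ ≤ L⁻¹ := by
        rw [norm_inv, norm_mul, Complex.norm_real, Real.norm_of_nonneg hL.le]
        gcongr
        norm_num; linarith
      have h2 : ‖ex (ν - ω) L - ex (ν - ω) (-L)‖ ≤ 2 := by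
        refine (norm_sub_le _ _).trans ?_
        rw [norm_ex, norm_ex]; norm_num
      gcongr
    · simpa using (tendsto_inv_atTop_zero (𝕜 := ℝ)).mul_const
        (‖c‖ * (2 / ‖(2 * Real.pi * (ν - ω : ℝ) * Complex.I : ℂ)‖))

lemma hfc_sub {f g : ℝ → ℂ} (hf : Continuous f) (hg : Continuous g) {ω : ℝ} {c d : ℂ}
    (h1 : HasFourierCoeff f ω c) (h2 : HasFourierCoeff g ω d) :
    HasFourierCoeff (fun x => f x - g x) ω (c - d) := by
  rw [hfc_iff] at *
  refine (h1.sub h2).congr fun L => ?_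
  rw [← mul_sub, ← intervalIntegral.integral_sub]
  · simp only [sub_mul]
  · exact (hf.mul (ex_continuous _)).intervalIntegrable _ _
  · exact (hg.mul (ex_continuous _)).intervalIntegrable _ _

lemma hfc_sum {ι : Type*} (s : Finset ι) (c : ι → ℂ) (ν : ι → ℝ) (ω : ℝ) :
    HasFourierCoeff (fun x => ∑ m ∈ s, c m * ex (ν m) x) ω
      (∑ m ∈ s, if ν m = ω then c m else 0) := by
  have := fun m => hfc_iff.1 (hfc_ex (c m) (ν m) ω)
  rw [hfc_iff]
  refine (tendsto_finsetSum s fun m _ => this m).congr fun L => ?_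
  rw [← Finset.mul_sum, ← intervalIntegral.integral_finsetSum]
  · simp only [Finset.sum_mul]
  · exact fun m _ => ((continuous_const.mul (ex_continuous _)).mul
      (ex_continuous _)).intervalIntegrable _ _

lemma norm_int_le {φ : ℝ → ℂ} {K a T : ℝ} (hT : 0 ≤ T)
    (h : ∀ x ∈ Set.Icc a (a + T), ‖φ x‖ ≤ K) : ‖∫ x in a..a + T, φ x‖ ≤ K * T := by
  have := intervalIntegral.norm_integral_le_of_norm_le_const (a := a) (b := a + T) (f := φ) (C := K)
    fun x hx => h x (by
      rw [Set.uIoc_of_le (by linarith)] at hx; exact ⟨hx.1.le, hx.2⟩)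
  rwa [add_sub_cancel_left, abs_of_nonneg hT] at this

lemma norm_int_le_abs {φ : ℝ → ℂ} {K : ℝ} (h : ∀ x, ‖φ x‖ ≤ K) (a b : ℝ) :
    ‖∫ x in a..b, φ x‖ ≤ K * |b - a| :=
  intervalIntegral.norm_integral_le_of_norm_le_const fun x _ => h x

/-- The symmetric means of `h · e^{2πiωx}` tend to zero, in division-free `ε`-form. This is the vanishing
of the Fourier coefficient of `h` at the frequency `-ω`. -/
def ZeroMean (h : ℝ → ℂ) (ω : ℝ) : Prop :=
  ∀ ε : ℝ, 0 < ε → ∃ L₀ : ℝ, 0 < L₀ ∧ ∀ L, L₀ ≤ L → ‖∫ x in (-L)..L, h x * ex ω x‖ ≤ ε * (2 * L)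

lemma zeroMean_of_approx {h : ℝ → ℂ} (hh : Continuous h) {ω : ℝ}
    (H : ∀ ε : ℝ, 0 < ε → ∃ p : ℝ → ℂ, Continuous p ∧ (∀ x, ‖h x - p x‖ ≤ ε) ∧
      HasFourierCoeff p (-ω) 0) : ZeroMean h ω := by
  intro ε hε
  obtain ⟨p, hp, hd, hz⟩ := H (ε / 2) (by positivity)
  rw [hfc_iff, neg_neg] at hz
  have := (hz.norm.eventually (gt_mem_nhds (show ‖(0 : ℂ)‖ < ε / 2 by simpa using hε)))
  obtain ⟨L₁, hL₁⟩ := eventually_atTop.1 this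
  refine ⟨max L₁ 1, by positivity, fun L hL => ?_⟩
  have hL0 : 0 < L := one_pos.trans_le ((le_max_right _ _).trans hL)
  have h1 := hL₁ L ((le_max_left _ _).trans hL)
  rw [norm_mul, norm_inv, norm_mul, Complex.norm_real, Real.norm_of_nonneg hL0.le,
    Complex.norm_ofNat, inv_mul_lt_iff₀ (by positivity)] at h1
  have h2 : ‖∫ x in (-L)..L, (h x - p x) * ex ω x‖ ≤ ε / 2 * |L - (-L)| :=
    norm_int_le_abs (fun x => by rw [norm_mul, norm_ex, mul_one]; exact hd x) _ _
  rw [sub_neg_eq_add, abs_of_pos (by linarith)] at h2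
  have e : ∫ x in (-L)..L, h x * ex ω x
      = (∫ x in (-L)..L, (h x - p x) * ex ω x) + ∫ x in (-L)..L, p x * ex ω x := by
    rw [← intervalIntegral.integral_add]
    · simp only [sub_mul, sub_add_cancel]
    · exact ((hh.sub hp).mul (ex_continuous _)).intervalIntegrable _ _
    · exact (hp.mul (ex_continuous _)).intervalIntegrable _ _
  rw [e]
  refine (norm_add_le _ _).trans ?_
  linarith

/-- If all windows of one fixed length `T₁` have mean at most `η`, then so do all windows of
any length `T`, up to the contribution of one incomplete window. -/
lemma block {φ : ℝ → ℂ} (hφ : Continuous φ) {C η T₁ : ℝ} (hC : ∀ x, ‖φ x‖ ≤ C) (hη : 0 ≤ η)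
    (hT₁ : 0 < T₁) (h : ∀ a, ‖∫ x in a..a + T₁, φ x‖ ≤ η * T₁) (a : ℝ) {T : ℝ} (hT : 0 ≤ T) :
    ‖∫ x in a..a + T, φ x‖ ≤ η * T + C * T₁ := by
  have hC0 : 0 ≤ C := (norm_nonneg _).trans (hC 0)
  have hn : ∀ n : ℕ, ‖∫ x in a..a + n * T₁, φ x‖ ≤ η * (n * T₁) := by
    intro n
    induction n with
    | zero => simp
    | succ n ih =>
      rw [← intervalIntegral.integral_add_adjacent_intervals (b := a + n * T₁)
        (hφ.intervalIntegrable _ _) (hφ.intervalIntegrable _ _)]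
      have := h (a + n * T₁)
      rw [show a + n * T₁ + T₁ = a + (n + 1 : ℕ) * T₁ by push_cast; ring] at this
      refine (norm_add_le _ _).trans ((add_le_add ih this).trans (le_of_eq ?_))
      push_cast; ring
  have h1 := Nat.floor_le (div_nonneg hT hT₁.le)
  have h2 := Nat.lt_floor_add_one (T / T₁)
  rw [le_div_iff₀ hT₁] at h1
  rw [div_lt_iff₀ hT₁] at h2
  set n := ⌊T / T₁⌋₊
  rw [← intervalIntegral.integral_add_adjacent_intervals (b := a + n * T₁)
        (hφ.intervalIntegrable _ _) (hφ.intervalIntegrable _ _)]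
  refine (norm_add_le _ _).trans (add_le_add ((hn n).trans (by gcongr)) ?_)
  refine (norm_int_le_abs hC _ _).trans ?_
  gcongr
  rw [abs_of_nonneg (by linarith)]
  linarith

/-- Vanishing of the mean at `ω` is uniform over the position `a` of the window: an almost period moves
any window to within a bounded distance of `[-L, L]`, and translation only changes the integral
by the unimodular factor `ex ω τ`. -/
lemma unif_a {h : ℝ → ℂ} (hh : BohrAP h) {ω : ℝ} (hz : ZeroMean h ω) {ε : ℝ} (hε : 0 < ε) :
    ∃ T : ℝ, 0 < T ∧ ∀ a, ‖∫ x in a..a + T, h x * ex ω x‖ ≤ ε * T := by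
  obtain ⟨C, hC, hb⟩ := bdd hh
  obtain ⟨L₀, hL₀, hL⟩ := hz (ε / 3) (by positivity)
  obtain ⟨l, hl, hτ⟩ := hh.2 (ε / 3) (by positivity)
  set L := max L₀ (3 * l * C / ε) with hLdef
  have hL1 : L₀ ≤ L := le_max_left _ _
  have hL2 : 3 * l * C ≤ L * ε := by
    rw [← div_le_iff₀ hε]; exact le_max_right _ _
  have hL0 : 0 < L := hL₀.trans_le hL1
  have hcont : Continuous fun x => h x * ex ω x := hh.1.mul (ex_continuous ω)
  have hii : ∀ a b, IntervalIntegrable (fun x => h x * ex ω x) volume a b :=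
    fun a b => hcont.intervalIntegrable a b
  have hbd : ∀ x, ‖h x * ex ω x‖ ≤ C := fun x => by rw [norm_mul, norm_ex, mul_one]; exact hb x
  refine ⟨2 * L, by positivity, fun a => ?_⟩
  obtain ⟨τ, ⟨h1, h2⟩, h3⟩ := hτ (a + L)
  have e1 : ∫ x in a..a + 2 * L, h (x - τ) * ex ω x
      = ex ω τ * ∫ x in (a - τ)..(a + 2 * L - τ), h x * ex ω x := by
    rw [← intervalIntegral.integral_comp_sub_right (fun x => h x * ex ω x),
      ← intervalIntegral.integral_const_mul]
    refine intervalIntegral.integral_congr fun x _ => ?_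
    have : ex ω x = ex ω (x - τ) * ex ω τ := by rw [← ex_add, sub_add_cancel]
    simp only [this]; ring
  have e2 : ∫ x in a..a + 2 * L, h x * ex ω x
      = (∫ x in a..a + 2 * L, h (x - τ) * ex ω x)
        - ∫ x in a..a + 2 * L, (h (x - τ) - h x) * ex ω x := by
    rw [← intervalIntegral.integral_sub]
    · refine intervalIntegral.integral_congr fun x _ => ?_
      ring
    · exact ((hh.1.comp (continuous_id.sub continuous_const)).mul
        (ex_continuous ω)).intervalIntegrable _ _
    · exact (((hh.1.comp (continuous_id.sub continuous_const)).sub hh.1).mul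
        (ex_continuous ω)).intervalIntegrable _ _
  have e3 : ∫ x in (a - τ)..(a + 2 * L - τ), h x * ex ω x
      = (∫ x in (a - τ)..(-L), h x * ex ω x) + (∫ x in (-L)..L, h x * ex ω x)
        + ∫ x in L..(a + 2 * L - τ), h x * ex ω x := by
    rw [intervalIntegral.integral_add_adjacent_intervals (hii _ _) (hii _ _),
      intervalIntegral.integral_add_adjacent_intervals (hii _ _) (hii _ _)]
  have b1 : ‖∫ x in (a - τ)..(-L), h x * ex ω x‖ ≤ C * l := by
    refine (norm_int_le_abs hbd _ _).trans ?_
    gcongr; rw [abs_le]; constructor <;> linarith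
  have b2 : ‖∫ x in L..(a + 2 * L - τ), h x * ex ω x‖ ≤ C * l := by
    refine (norm_int_le_abs hbd _ _).trans ?_
    gcongr; rw [abs_le]; constructor <;> linarith
  have b3 := hL L hL1
  have b4 : ‖∫ x in a..a + 2 * L, (h (x - τ) - h x) * ex ω x‖ ≤ ε / 3 * (2 * L) :=
    norm_int_le (by positivity) fun x _ => by
      rw [norm_mul, norm_ex, mul_one]; exact (h3 x).le
  rw [e2, e1]
  refine (norm_sub_le _ _).trans ?_
  rw [norm_mul, norm_ex, one_mul, e3]
  have b5 := norm_add₃_le (a := ∫ x in (a - τ)..(-L), h x * ex ω x)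
    (b := ∫ x in (-L)..L, h x * ex ω x) (c := ∫ x in L..(a + 2 * L - τ), h x * ex ω x)
  linarith

/-- Vanishing of the mean at `ω₀` gives smallness near `ω₀`, uniformly in the length and
position of long windows: on windows of a fixed length `T₁`, the character of a nearby frequency is
a constant multiple of `ex ω₀` up to a small error. -/
lemma unif_loc {h : ℝ → ℂ} (hh : BohrAP h) {ω₀ : ℝ} (hz : ZeroMean h ω₀) {ε : ℝ} (hε : 0 < ε) :
    ∃ δ : ℝ, 0 < δ ∧ ∃ T₀ : ℝ, ∀ ω, |ω - ω₀| < δ → ∀ T, T₀ ≤ T → ∀ a,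
      ‖∫ x in a..a + T, h x * ex ω x‖ ≤ ε * T := by
  obtain ⟨C, hC, hb⟩ := bdd hh
  obtain ⟨T₁, hT₁, hT⟩ := unif_a hh hz (show 0 < ε / 4 by positivity)
  have hpi := Real.pi_pos
  refine ⟨ε / (4 * (C * (2 * Real.pi * T₁))), by positivity, max 0 (2 * (C * T₁) / ε),
    fun ω hω T hT' a => ?_⟩
  rw [lt_div_iff₀ (by positivity)] at hω
  have hT0 : 0 ≤ T := (le_max_left _ _).trans hT'
  have hT2 : 2 * (C * T₁) ≤ T * ε := by
    rw [← div_le_iff₀ hε]; exact (le_max_right _ _).trans hT'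
  have hbl : ∀ a, ‖∫ x in a..a + T₁, h x * ex ω x‖ ≤ ε / 2 * T₁ := by
    intro a
    have e : ∫ x in a..a + T₁, h x * ex ω x = ex (ω - ω₀) a * (∫ x in a..a + T₁, h x * ex ω₀ x)
        + ∫ x in a..a + T₁, h x * ex ω₀ x * ex (ω - ω₀) a * (ex (ω - ω₀) (x - a) - 1) := by
      rw [← intervalIntegral.integral_const_mul, ← intervalIntegral.integral_add]
      · refine intervalIntegral.integral_congr fun x _ => ?_
        have h1 : ex ω x = ex ω₀ x * ex (ω - ω₀) x := by rw [← ex_add_freq]; congr 1; ring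
        have h2 : ex (ω - ω₀) x = ex (ω - ω₀) a * ex (ω - ω₀) (x - a) := by
          rw [← ex_add]; congr 1; ring
        simp only [h1, h2]; ring
      · exact (continuous_const.mul (hh.1.mul (ex_continuous _))).intervalIntegrable _ _
      · exact ((((hh.1.mul (ex_continuous _)).mul continuous_const)).mul
          (((ex_continuous _).comp (continuous_id.sub continuous_const)).sub
            continuous_const)).intervalIntegrable _ _
    have b : ‖∫ x in a..a + T₁, h x * ex ω₀ x * ex (ω - ω₀) a * (ex (ω - ω₀) (x - a) - 1)‖
        ≤ ε / 4 * T₁ := by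
      refine norm_int_le hT₁.le fun x hx => ?_
      rw [norm_mul, norm_mul, norm_mul, norm_ex, norm_ex, mul_one, mul_one]
      have h1 := norm_ex_sub_one_le (ω - ω₀) (x - a)
      have h2 : |x - a| ≤ T₁ := by
        rw [abs_of_nonneg (by linarith [hx.1])]; linarith [hx.2]
      calc _ ≤ C * (2 * Real.pi * |ω - ω₀| * T₁) := by
            gcongr
            · exact hb x
            · exact h1.trans (by gcongr)
        _ ≤ _ := by linarith
    rw [e]
    refine (norm_add_le _ _).trans ?_
    rw [norm_mul, norm_ex, one_mul]
    linarith [hT a]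
  have := block (φ := fun x => h x * ex ω x) (hh.1.mul (ex_continuous ω)) (C := C)
    (fun x => by rw [norm_mul, norm_ex, mul_one]; exact hb x) (by positivity) hT₁ hbl a hT0
  linarith

/-- A Riemann–Lebesgue lemma: at large frequencies `h` is almost constant on each period of
the character. -/
lemma unif_large {h : ℝ → ℂ} (hh : BohrAP h) {ε : ℝ} (hε : 0 < ε) :
    ∃ W : ℝ, 0 < W ∧ ∃ T₀ : ℝ, ∀ ω, W ≤ |ω| → ∀ T, T₀ ≤ T → ∀ a,
      ‖∫ x in a..a + T, h x * ex ω x‖ ≤ ε * T := by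
  obtain ⟨C, hC, hb⟩ := bdd hh
  obtain ⟨δ, hδ, hu⟩ := unifCont hh (show 0 < ε / 2 by positivity)
  refine ⟨1 / δ, by positivity, max 0 (2 * (C * δ) / ε), fun ω hω T hT' a => ?_⟩
  have hω0 : 0 < |ω| := lt_of_lt_of_le (by positivity) hω
  have hω1 : ω ≠ 0 := abs_pos.1 hω0
  have hT₁ : 0 < |1 / ω| := abs_pos.2 (one_div_ne_zero hω1)
  have hT₁' : |1 / ω| ≤ δ := by rw [abs_div, abs_one]; exact (one_div_le hω0 hδ).2 hω
  have hT0 : 0 ≤ T := (le_max_left _ _).trans hT'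
  have hT2 : 2 * (C * δ) ≤ T * ε := by
    rw [← div_le_iff₀ hε]; exact (le_max_right _ _).trans hT'
  have hone : ex ω |1 / ω| = 1 := by
    rcases abs_choice (1 / ω) with h | h <;> rw [h]
    · exact ex_one_div hω1
    · have := ex_add ω (1 / ω) (-(1 / ω))
      rw [add_neg_cancel, ex_one_div hω1, one_mul] at this
      rw [← this]; simp [ex]
  have hbl : ∀ a, ‖∫ x in a..a + |1 / ω|, h x * ex ω x‖ ≤ ε / 2 * |1 / ω| := by
    intro a
    have e : ∫ x in a..a + |1 / ω|, h x * ex ω x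
        = ∫ x in a..a + |1 / ω|, (h x - h a) * ex ω x := by
      have : ∫ x in a..a + |1 / ω|, h a * ex ω x = 0 := by
        rw [intervalIntegral.integral_const_mul, integral_ex hω1, ex_add, hone]; simp
      rw [← sub_zero (∫ x in a..a + |1 / ω|, h x * ex ω x), ← this,
        ← intervalIntegral.integral_sub]
      · simp only [sub_mul]
      · exact (hh.1.mul (ex_continuous _)).intervalIntegrable _ _
      · exact (continuous_const.mul (ex_continuous _)).intervalIntegrable _ _
    rw [e]
    refine norm_int_le hT₁.le fun x hx => ?_
    rw [norm_mul, norm_ex, mul_one]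
    refine hu x a ?_
    rw [abs_of_nonneg (by linarith [hx.1])]; linarith [hx.2]
  have := block (φ := fun x => h x * ex ω x) (hh.1.mul (ex_continuous ω)) (C := C)
    (fun x => by rw [norm_mul, norm_ex, mul_one]; exact hb x) (by positivity) hT₁ hbl a hT0
  have h4 : C * |1 / ω| ≤ C * δ := by gcongr
  linarith

/-- If all Fourier coefficients vanish, then the means over long windows are small uniformly
in the frequency: compactness covers bounded frequencies, `unif_large` the others. -/
lemma unif_all {h : ℝ → ℂ} (hh : BohrAP h) (hz : ∀ ω, ZeroMean h ω) {ε : ℝ} (hε : 0 < ε) :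
    ∃ T₀ : ℝ, ∀ ω, ∀ T, T₀ ≤ T → ∀ a, ‖∫ x in a..a + T, h x * ex ω x‖ ≤ ε * T := by
  obtain ⟨W, hW, T₁, h1⟩ := unif_large hh hε
  have h2 : ∃ T₀ : ℝ, ∀ ω ∈ Set.Icc (-W) W, ∀ T, T₀ ≤ T → ∀ a,
      ‖∫ x in a..a + T, h x * ex ω x‖ ≤ ε * T := by
    refine isCompact_Icc.induction_on (p := fun s => ∃ T₀ : ℝ, ∀ ω ∈ s, ∀ T, T₀ ≤ T → ∀ a,
      ‖∫ x in a..a + T, h x * ex ω x‖ ≤ ε * T) ?_ ?_ ?_ ?_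
    · exact ⟨0, fun ω hω => absurd hω (Set.notMem_empty ω)⟩
    · rintro s t hst ⟨T₀, H⟩
      exact ⟨T₀, fun ω hω => H ω (hst hω)⟩
    · rintro s t ⟨T₀, H⟩ ⟨T₀', H'⟩
      refine ⟨max T₀ T₀', fun ω hω T hT => ?_⟩
      rcases hω with hω | hω
      · exact H ω hω T ((le_max_left _ _).trans hT)
      · exact H' ω hω T ((le_max_right _ _).trans hT)
    · intro ω₀ _
      obtain ⟨δ, hδ, T₀, H⟩ := unif_loc hh (hz ω₀) hε
      exact ⟨Metric.ball ω₀ δ, mem_nhdsWithin_of_mem_nhds (Metric.ball_mem_nhds _ hδ), T₀,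
        fun ω hω => H ω (by simpa [Real.dist_eq] using hω)⟩
  obtain ⟨T₂, h2⟩ := h2
  refine ⟨max T₁ T₂, fun ω T hT => ?_⟩
  rcases le_total W |ω| with h | h
  · exact h1 ω h T ((le_max_left _ _).trans hT)
  · exact h2 ω (abs_le.1 h) T ((le_max_right _ _).trans hT)

/-! ### Lower bounds for the quadratic mean -/

/-- Quantitative form of the fact that a nonzero almost periodic function has positive quadratic
mean. The constants depend only on the modulus of continuity `δ` and the inclusion length `l` at the
scale `κ`, not on `φ`; this allows an application to a family of correlations `corr h T`
with constants independent of `T`. -/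
lemma lower_bound {δ l κ : ℝ} (hδ : 0 < δ) (hl : 0 < l) (hκ : 0 < κ) :
    ∃ c : ℝ, 0 < c ∧ ∃ T₀ : ℝ, 0 < T₀ ∧ ∀ φ : ℝ → ℂ, Continuous φ → ∀ x₀, 3 * κ ≤ ‖φ x₀‖ →
      (∀ x y, |x - y| ≤ δ → ‖φ x - φ y‖ ≤ κ) →
      (∀ a, ∃ τ ∈ Set.Icc a (a + l), ∀ x, ‖φ (x - τ) - φ x‖ ≤ κ) →
      ∀ T, T₀ ≤ T → c * T ≤ ∫ x in (0 : ℝ)..T, ‖φ x‖ ^ 2 := by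
  refine ⟨δ * κ ^ 2 / (2 * (l + δ)), by positivity, l + δ, by positivity, ?_⟩
  intro φ hφ x₀ hx₀ hmod hap T hT
  have hc2 : Continuous fun x => ‖φ x‖ ^ 2 := by fun_prop
  have hii : ∀ a b, IntervalIntegrable (fun x => ‖φ x‖ ^ 2) volume a b :=
    fun a b => hc2.intervalIntegrable a b
  have hB : 0 < l + δ := by positivity
  have hbl : ∀ a, δ * κ ^ 2 ≤ ∫ x in a..a + (l + δ), ‖φ x‖ ^ 2 := by
    intro a
    obtain ⟨τ, ⟨h1, h2⟩, h3⟩ := hap (a - x₀)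
    have hp : ∀ y ∈ Set.Icc (x₀ + τ) (x₀ + τ + δ), κ ^ 2 ≤ ‖φ y‖ ^ 2 := by
      intro y hy
      have k1 := h3 y
      have k2 := hmod x₀ (y - τ) (by rw [abs_le]; constructor <;> linarith [hy.1, hy.2])
      have k3 := norm_sub_norm_le (φ x₀) (φ (y - τ))
      have k4 := norm_sub_norm_le (φ (y - τ)) (φ y)
      gcongr
      linarith
    calc δ * κ ^ 2 = ∫ x in (x₀ + τ)..(x₀ + τ + δ), κ ^ 2 := by simp
      _ ≤ ∫ x in (x₀ + τ)..(x₀ + τ + δ), ‖φ x‖ ^ 2 :=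
          intervalIntegral.integral_mono_on (by linarith)
            (continuous_const.intervalIntegrable _ _) (hii _ _) hp
      _ ≤ ∫ x in a..a + (l + δ), ‖φ x‖ ^ 2 :=
          intervalIntegral.integral_mono_interval (by linarith) (by linarith) (by linarith)
            (Eventually.of_forall fun x => by positivity) (hii _ _)
  have hn : ∀ n : ℕ, n * (δ * κ ^ 2) ≤ ∫ x in (0 : ℝ)..n * (l + δ), ‖φ x‖ ^ 2 := by
    intro n
    induction n with
    | zero => simp
    | succ n ih =>
      rw [← intervalIntegral.integral_add_adjacent_intervals (b := n * (l + δ)) (hii _ _) (hii _ _)]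
      have := hbl (n * (l + δ))
      rw [show n * (l + δ) + (l + δ) = (n + 1 : ℕ) * (l + δ) by push_cast; ring] at this
      push_cast at *
      linarith
  have hT0 : 0 < T := hB.trans_le hT
  have h1 := Nat.floor_le (div_nonneg hT0.le hB.le)
  have h2 := Nat.lt_floor_add_one (T / (l + δ))
  have h3 : (1 : ℝ) ≤ ⌊T / (l + δ)⌋₊ := by
    exact_mod_cast Nat.le_floor (by rw [Nat.cast_one, one_le_div hB]; exact hT)
  set n := ⌊T / (l + δ)⌋₊
  have h4 : T / (l + δ) / 2 ≤ n := by linarith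
  rw [le_div_iff₀ hB] at h1
  calc _ = T / (l + δ) / 2 * (δ * κ ^ 2) := by field_simp
    _ ≤ n * (δ * κ ^ 2) := by gcongr
    _ ≤ _ := hn n
    _ ≤ _ := intervalIntegral.integral_mono_interval le_rfl (by positivity) h1
            (Eventually.of_forall fun x => by positivity) (hii _ _)

/-! ### Autocorrelation on the circle -/

section Circle
open AddCircle ComplexConjugate

variable {T : ℝ} [hT : Fact (0 < T)]

/-- Parseval's identity for a bounded measurable function on the circle. -/
lemma parseval {v : AddCircle T → ℂ} (hv : Measurable v) {C : ℝ} (hC : ∀ x, ‖v x‖ ≤ C) :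
    HasSum (fun n => ‖fourierCoeff v n‖ ^ 2) (∫ t, ‖v t‖ ^ 2 ∂haarAddCircle) := by
  have hm : MemLp v 2 haarAddCircle :=
    MemLp.of_bound hv.aestronglyMeasurable C (Eventually.of_forall hC)
  have h := hasSum_sq_fourierCoeff hm.toLp
  have h1 : ∀ n, fourierCoeff (hm.toLp : AddCircle T → ℂ) n = fourierCoeff v n := fun n => by
    rw [fourierCoeff_congr_ae hm.coeFn_toLp]
  have h2 : ∫ t, ‖(hm.toLp : AddCircle T → ℂ) t‖ ^ 2 ∂haarAddCircle
      = ∫ t, ‖v t‖ ^ 2 ∂haarAddCircle := by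
    refine integral_congr_ae ?_
    filter_upwards [hm.coeFn_toLp] with t ht
    rw [ht]
  simpa only [h1, h2] using h

/-- The autocorrelation `x ↦ ∫ u(x + t) conj(u(t)) dt` on the circle of length `T`, with respect to
the Haar probability measure. -/
def acorr (u : AddCircle T → ℂ) (x : AddCircle T) : ℂ :=
  ∫ t, u (x + t) * conj (u t) ∂haarAddCircle

lemma measurable_acorr {u : AddCircle T → ℂ} (hu : Measurable u) : Measurable (acorr u) := by
  have : Measurable fun p : AddCircle T × AddCircle T => u (p.1 + p.2) * conj (u p.2) :=
    (hu.comp measurable_add).mul (Complex.continuous_conj.measurable.comp (hu.comp measurable_snd))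
  exact (StronglyMeasurable.integral_prod_right this.stronglyMeasurable).measurable

lemma norm_acorr_le {u : AddCircle T → ℂ} {C : ℝ} (hC : ∀ x, ‖u x‖ ≤ C)
    (x : AddCircle T) : ‖acorr u x‖ ≤ C ^ 2 := by
  have hC0 : 0 ≤ C := (norm_nonneg _).trans (hC 0)
  have := norm_integral_le_of_norm_le_const (μ := haarAddCircle (T := T))
    (f := fun t => u (x + t) * conj (u t)) (C := C ^ 2) (Eventually.of_forall fun t => by
      rw [norm_mul, RCLike.norm_conj, sq]
      exact mul_le_mul (hC _) (hC _) (norm_nonneg _) hC0)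
  simpa [acorr] using this

lemma norm_fourierCoeff_acorr {u : AddCircle T → ℂ} (hu : Measurable u) {C : ℝ}
    (hC : ∀ x, ‖u x‖ ≤ C) (n : ℤ) : ‖fourierCoeff (acorr u) n‖ = ‖fourierCoeff u n‖ ^ 2 := by
  have hC0 : 0 ≤ C := (norm_nonneg _).trans (hC 0)
  have hint : Integrable (fun p : AddCircle T × AddCircle T =>
      fourier (-n) p.1 * (u (p.1 + p.2) * conj (u p.2)))
      (haarAddCircle.prod haarAddCircle) := by
    refine Integrable.of_bound (C := C * C) (Measurable.aestronglyMeasurable ?_)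
      (Eventually.of_forall fun p => ?_)
    · exact ((fourier (-n)).continuous.measurable.comp measurable_fst).mul
        ((hu.comp measurable_add).mul
          (Complex.continuous_conj.measurable.comp (hu.comp measurable_snd)))
    · have : ‖(fourier (-n) p.1 : ℂ)‖ = 1 := by rw [fourier_apply]; exact Circle.norm_coe _
      rw [norm_mul, this, one_mul, norm_mul, RCLike.norm_conj]
      exact mul_le_mul (hC _) (hC _) (norm_nonneg _) hC0
  have hinner : ∀ t, ∫ x, fourier (-n) x * (u (x + t) * conj (u t)) ∂haarAddCircle
      = conj (fourier (-n) t * u t) * fourierCoeff u n := by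
    intro t
    rw [fourierCoeff, ← integral_const_mul, ← integral_add_right_eq_self (μ := haarAddCircle)
      (fun x => conj (fourier (-n) t * u t) * (fourier (-n) x • u x)) t]
    refine integral_congr_ae (Eventually.of_forall fun x => ?_)
    have h1 : (fourier (-n) (x + t) : ℂ) = fourier (-n) x * fourier (-n) t := by
      simp only [fourier_apply, smul_add, toCircle_add, Circle.coe_mul]
    have h2 : conj (fourier (-n) t : ℂ) * fourier (-n) t = 1 := by
      rw [fourier_apply, ← Complex.normSq_eq_conj_mul_self, Circle.normSq_coe]; simp
    simp only [h1, smul_eq_mul, map_mul]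
    linear_combination (-(fourier (-n) x * u (x + t) * conj (u t) : ℂ)) * h2
  have : fourierCoeff (acorr u) n = conj (fourierCoeff u n) * fourierCoeff u n := by
    conv_lhs => rw [fourierCoeff]
    simp only [acorr, smul_eq_mul, ← integral_const_mul]
    rw [integral_integral_swap hint]
    simp only [hinner]
    rw [integral_mul_const, integral_conj]
    rfl
  rw [this, norm_mul, RCLike.norm_conj, sq]

/-- By Parseval, the quadratic mean of the autocorrelation is `∑ ‖û(n)‖⁴`, which is at most
`(sup ‖û‖)² ∑ ‖û(n)‖²`. -/
lemma integral_acorr_le {u : AddCircle T → ℂ} (hu : Measurable u) {C η : ℝ}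
    (hC : ∀ x, ‖u x‖ ≤ C) (hη : ∀ n, ‖fourierCoeff u n‖ ≤ η) :
    ∫ x, ‖acorr u x‖ ^ 2 ∂haarAddCircle ≤ η ^ 2 * C ^ 2 := by
  have h1 := parseval (measurable_acorr hu) (norm_acorr_le hC)
  have h2 := parseval hu hC
  have h3 : ∫ t, ‖u t‖ ^ 2 ∂haarAddCircle ≤ C ^ 2 := by
    have := norm_integral_le_of_norm_le_const (μ := haarAddCircle (T := T))
      (f := fun t => ‖u t‖ ^ 2) (C := C ^ 2) (Eventually.of_forall fun t => by
        rw [norm_pow, norm_norm]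
        exact pow_le_pow_left₀ (norm_nonneg _) (hC t) 2)
    exact (Real.le_norm_self _).trans (by simpa using this)
  refine (hasSum_le (fun n => ?_) h1 (h2.mul_left (η ^ 2))).trans (by gcongr)
  rw [norm_fourierCoeff_acorr hu hC, sq (‖fourierCoeff u n‖ ^ 2)]
  gcongr
  exact hη n

lemma measurable_liftIoc {h : ℝ → ℂ} (hh : Continuous h) : Measurable (liftIoc T 0 h) := by
  exact (hh.measurable.comp measurable_subtype_coe).comp (measurableEquivIoc T 0).measurable

lemma fourierCoeff_liftIoc (h : ℝ → ℂ) (n : ℤ) : fourierCoeff (liftIoc T 0 h) n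
    = T⁻¹ * ∫ x in (0 : ℝ)..0 + T, h x * ex (-(n / T)) x := by
  rw [fourierCoeff_liftIoc_eq, fourierCoeffOn_eq_integral]
  simp only [fourier_coe_apply, zero_add, sub_zero, Complex.real_smul, one_div, smul_eq_mul]
  push_cast
  congr 1
  refine intervalIntegral.integral_congr fun x _ => ?_
  simp only [ex]
  rw [mul_comm]
  congr 2
  push_cast; ring

/-- `liftIoc T 0 h` is the `T`-periodisation of the restriction of `h` to `(0, T]`. If `T` is an
`ε`-almost period of `h`, it stays `ε`-close to `h` on the next period. -/
lemma liftIoc_add {h : ℝ → ℂ} {ε : ℝ} (hε : ∀ x, ‖h (x - T) - h x‖ ≤ ε) {x t : ℝ}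
    (hx : x ∈ Set.Ioc 0 T) (ht : t ∈ Set.Ioc 0 T) :
    ‖h (x + t) - liftIoc T 0 h ((x : AddCircle T) + (t : AddCircle T))‖ ≤ ε := by
  rw [← AddCircle.coe_add]
  rcases le_or_gt (x + t) T with hle | hgt
  · rw [liftIoc_coe_apply ⟨by linarith [hx.1, ht.1], by linarith⟩, sub_self, norm_zero]
    exact (norm_nonneg _).trans (hε 0)
  · have : ((x + t : ℝ) : AddCircle T) = ((x + t - T : ℝ) : AddCircle T) := by
      rw [AddCircle.coe_sub, AddCircle.coe_period, sub_zero]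
    rw [this, liftIoc_coe_apply ⟨by linarith, by linarith [hx.2, ht.2]⟩, norm_sub_rev]
    exact hε _

end Circle

/-! ### Autocorrelation over an almost period and the uniqueness theorem -/

open ComplexConjugate

/-- The correlation `T⁻¹ ∫₀ᵀ h(x + t) conj(h(t)) dt` of `h` with itself over the window `[0, T]`, without
periodisation. -/
def corr (h : ℝ → ℂ) (T x : ℝ) : ℂ := (T : ℂ)⁻¹ * ∫ t in (0 : ℝ)..T, h (x + t) * conj (h t)

lemma norm_mean_le {φ : ℝ → ℂ} {K T : ℝ} (hT : 0 < T)
    (h : ∀ t ∈ Set.Ioc 0 T, ‖φ t‖ ≤ K) : ‖(T : ℂ)⁻¹ * ∫ t in (0 : ℝ)..T, φ t‖ ≤ K := by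
  have := intervalIntegral.norm_integral_le_of_norm_le_const (a := 0) (b := T) (f := φ) (C := K)
    fun x hx => h x (by rwa [Set.uIoc_of_le hT.le] at hx)
  rw [sub_zero, abs_of_pos hT] at this
  rw [norm_mul, norm_inv, Complex.norm_real, Real.norm_of_nonneg hT.le, inv_mul_le_iff₀ hT]
  linarith

/-- Every almost period and every modulus of continuity of `h` passes to `corr h T`, up to the
factor `C`, uniformly in `T`. -/
lemma corr_diff {h : ℝ → ℂ} (hh : Continuous h) {C : ℝ} (hC : ∀ x, ‖h x‖ ≤ C) {T : ℝ} (hT : 0 < T)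
    {x y ε : ℝ} (hxy : ∀ t, ‖h (x + t) - h (y + t)‖ ≤ ε) :
    ‖corr h T x - corr h T y‖ ≤ ε * C := by
  have hε : 0 ≤ ε := (norm_nonneg _).trans (hxy 0)
  have hcont : ∀ x, Continuous fun t => h (x + t) * conj (h t) := fun x => by fun_prop
  unfold corr
  rw [← mul_sub, ← intervalIntegral.integral_sub ((hcont x).intervalIntegrable _ _)
    ((hcont y).intervalIntegrable _ _)]
  refine norm_mean_le hT fun t _ => ?_
  rw [← sub_mul, norm_mul, RCLike.norm_conj]
  exact mul_le_mul (hxy t) (hC t) (norm_nonneg _) hε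

lemma corr_continuous {h : ℝ → ℂ} (hh : BohrAP h) {T : ℝ} (hT : 0 < T) :
    Continuous (corr h T) := by
  obtain ⟨C, hC, hb⟩ := bdd hh
  rw [Metric.continuous_iff]
  intro y ε hε
  obtain ⟨δ, hδ, hu⟩ := unifCont hh (show 0 < ε / (2 * C) by positivity)
  refine ⟨δ, hδ, fun x hx => ?_⟩
  rw [Real.dist_eq] at hx
  rw [dist_eq_norm]
  refine (corr_diff hh.1 hb hT fun t => hu _ _ (by
    rw [add_sub_add_right_eq_sub]; exact hx.le)).trans_lt ?_
  calc ε / (2 * C) * C = ε / 2 := by field_simp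
    _ < ε := by linarith

lemma intervalIntegrable_of_bdd {E : Type*} [NormedAddCommGroup E] [MeasurableSpace E]
    [BorelSpace E] [SecondCountableTopology E] {φ : ℝ → E} (hφ : Measurable φ) {K : ℝ}
    (hK : ∀ x, ‖φ x‖ ≤ K) {a b : ℝ} : IntervalIntegrable φ volume a b := by
  rw [intervalIntegrable_iff]
  exact Measure.integrableOn_of_bounded (by simp [Set.uIoc]) hφ.aestronglyMeasurable
    (Eventually.of_forall hK)

/-- If `T` is an almost period of `h`, then on one period the correlation of `h` is uniformly close
to the autocorrelation of the `T`-periodisation of `h`: the wrap-around only costs a translation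
by `T`. -/
lemma corr_sub_acorr {h : ℝ → ℂ} (hh : Continuous h) {C : ℝ} (hC : ∀ x, ‖h x‖ ≤ C) {T : ℝ}
    [hT : Fact (0 < T)] {ε : ℝ} (hε : ∀ x, ‖h (x - T) - h x‖ ≤ ε) {x : ℝ}
    (hx : x ∈ Set.Ioc 0 T) : ‖corr h T x - acorr (AddCircle.liftIoc T 0 h) x‖ ≤ ε * C := by
  have hε0 : 0 ≤ ε := (norm_nonneg _).trans (hε 0)
  set u := AddCircle.liftIoc T 0 h with hu
  have hum : Measurable u := measurable_liftIoc hh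
  have huC : ∀ y, ‖u y‖ ≤ C := fun y => hC _
  have e : acorr u x = (T : ℂ)⁻¹ * ∫ t in (0 : ℝ)..T,
      u ((x : AddCircle T) + (t : AddCircle T)) * conj (u (t : AddCircle T)) := by
    have := AddCircle.intervalIntegral_preimage T 0 fun t => u ((x : AddCircle T) + t) * conj (u t)
    rw [zero_add] at this
    rw [acorr, AddCircle.integral_haarAddCircle, this, Complex.real_smul, Complex.ofReal_inv]
  have hm : Measurable fun t : ℝ =>
      u ((x : AddCircle T) + (t : AddCircle T)) * conj (u (t : AddCircle T)) := by
    have hmk : Measurable fun t : ℝ => (t : AddCircle T) := AddCircle.measurable_mk'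
    exact (hum.comp (hmk.const_add _)).mul
      (Complex.continuous_conj.measurable.comp (hum.comp hmk))
  have hii : IntervalIntegrable (fun t : ℝ =>
      u ((x : AddCircle T) + (t : AddCircle T)) * conj (u (t : AddCircle T))) volume 0 T := by
    refine intervalIntegrable_of_bdd hm (K := C * C) fun t => ?_
    rw [norm_mul, RCLike.norm_conj]
    exact mul_le_mul (huC _) (huC _) (norm_nonneg _) ((norm_nonneg _).trans (hC 0))
  have hcont : Continuous fun t => h (x + t) * conj (h t) := by fun_prop
  rw [e, corr, ← mul_sub, ← intervalIntegral.integral_sub (hcont.intervalIntegrable _ _) hii]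
  refine norm_mean_le hT.out fun t ht => ?_
  have h1 : u (t : AddCircle T) = h t := AddCircle.liftIoc_coe_apply (by simpa using ht)
  rw [h1, ← sub_mul, norm_mul, RCLike.norm_conj]
  exact mul_le_mul (liftIoc_add hε hx ht) (hC t) (norm_nonneg _) hε0

lemma integral_corr_le {h : ℝ → ℂ} (hh : BohrAP h) {C : ℝ} (hC : ∀ x, ‖h x‖ ≤ C) {T : ℝ}
    (hT : 0 < T) {ε η : ℝ} (hε : ∀ x, ‖h (x - T) - h x‖ ≤ ε)
    (hη : ∀ ω, ‖∫ x in (0 : ℝ)..0 + T, h x * ex ω x‖ ≤ η * T) :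
    ∫ x in (0 : ℝ)..T, ‖corr h T x‖ ^ 2 ≤ (2 * (η * C) ^ 2 + 2 * (ε * C) ^ 2) * T := by
  have : Fact (0 < T) := ⟨hT⟩
  set u := AddCircle.liftIoc T 0 h with hu
  have hum : Measurable u := measurable_liftIoc hh.1
  have huC : ∀ y, ‖u y‖ ≤ C := fun y => hC _
  have h1 := integral_acorr_le hum huC (η := η) fun n => by
    rw [hu, fourierCoeff_liftIoc, norm_mul, Complex.norm_real, norm_inv,
      Real.norm_of_nonneg hT.le, inv_mul_le_iff₀ hT, mul_comm T]
    exact hη _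
  have e := AddCircle.intervalIntegral_preimage T 0 fun t => ‖acorr u t‖ ^ 2
  rw [AddCircle.integral_haarAddCircle, ← e, zero_add, smul_eq_mul, inv_mul_le_iff₀ hT] at h1
  have hii : IntervalIntegrable (fun x : ℝ => ‖acorr u x‖ ^ 2) volume 0 T := by
    have hmk : Measurable fun t : ℝ => (t : AddCircle T) := AddCircle.measurable_mk'
    refine intervalIntegrable_of_bdd (K := (C ^ 2) ^ 2)
      (((measurable_acorr hum).comp hmk).norm.pow_const 2) fun t => ?_
    rw [norm_pow, norm_norm]
    exact pow_le_pow_left₀ (norm_nonneg _) (norm_acorr_le huC _) 2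
  have hcc := corr_continuous hh hT
  calc ∫ x in (0 : ℝ)..T, ‖corr h T x‖ ^ 2
      ≤ ∫ x in (0 : ℝ)..T, (2 * ‖acorr u x‖ ^ 2 + 2 * (ε * C) ^ 2) := by
        refine intervalIntegral.integral_mono_on_of_le_Ioo hT.le
          (Continuous.intervalIntegrable (by fun_prop) _ _)
          ((hii.const_mul 2).add (continuous_const.intervalIntegrable _ _)) fun x hx => ?_
        have k := corr_sub_acorr hh.1 hC hε (T := T) ⟨hx.1, hx.2.le⟩
        have k2 := norm_sub_norm_le (corr h T x) (acorr u x)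
        have k3 : ‖corr h T x‖ ≤ ‖acorr u x‖ + ε * C := by linarith
        have k4 : ‖corr h T x‖ ^ 2 ≤ (‖acorr u x‖ + ε * C) ^ 2 := by gcongr
        nlinarith [sq_nonneg (‖acorr u x‖ - ε * C)]
    _ = 2 * (∫ x in (0 : ℝ)..T, ‖acorr u x‖ ^ 2) + 2 * (ε * C) ^ 2 * T := by
        rw [intervalIntegral.integral_add (hii.const_mul 2)
          (continuous_const.intervalIntegrable _ _), intervalIntegral.integral_const_mul]
        simp; ring
    _ ≤ _ := by nlinarith

/-- Uniqueness theorem: a Bohr almost periodic function all of whose Fourier coefficients vanish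
is zero. -/
theorem uniqueness {h : ℝ → ℂ} (hh : BohrAP h) (hz : ∀ ω, ZeroMean h ω) (x₀ : ℝ) : h x₀ = 0 := by
  by_contra hx₀
  obtain ⟨C, hC, hb⟩ := bdd hh
  -- first use of `lower_bound`: `h` has quadratic mean at least `c₀`
  have hκ : 0 < ‖h x₀‖ / 3 := by have := norm_pos_iff.2 hx₀; positivity
  obtain ⟨δ, hδ, hu⟩ := unifCont hh hκ
  obtain ⟨l, hl, hap⟩ := hh.2 _ hκ
  obtain ⟨c₀, hc₀, T₀, hT₀, H₀⟩ := lower_bound hδ hl hκ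
  have H₀ := H₀ h hh.1 x₀ (by linarith) hu fun a => by
    obtain ⟨τ, h1, h2⟩ := hap a
    exact ⟨τ, h1, fun x => (h2 x).le⟩
  -- second use: `corr h T 0` is the quadratic mean of `h`, so `corr h T` is large at `0` and
  -- therefore has quadratic mean at least `c₁`, with `c₁` independent of `T`
  have hκ' : 0 < c₀ / 3 / C := by positivity
  obtain ⟨δ', hδ', hu'⟩ := unifCont hh hκ'
  obtain ⟨l', hl', hap'⟩ := hh.2 _ hκ'
  obtain ⟨c₁, hc₁, T₁, hT₁, H₁⟩ := lower_bound hδ' hl' (show 0 < c₀ / 3 by positivity)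
  have hcC : c₀ / 3 / C * C = c₀ / 3 := by field_simp
  have H₁ : ∀ T, T₀ ≤ T → T₁ ≤ T → c₁ * T ≤ ∫ x in (0 : ℝ)..T, ‖corr h T x‖ ^ 2 := by
    intro T h0 h1
    have hT := hT₀.trans_le h0
    refine H₁ (corr h T) (corr_continuous hh hT) 0 ?_ ?_ ?_ T h1
    · have e : corr h T 0 = ((T⁻¹ * ∫ x in (0 : ℝ)..T, ‖h x‖ ^ 2 : ℝ) : ℂ) := by
        rw [corr, Complex.ofReal_mul, Complex.ofReal_inv, ← intervalIntegral.integral_ofReal]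
        congr 1
        refine intervalIntegral.integral_congr fun x _ => ?_
        simp only [zero_add, Complex.mul_conj, Complex.normSq_eq_norm_sq]
      rw [e, Complex.norm_real]
      refine le_trans ?_ (Real.le_norm_self _)
      rw [le_inv_mul_iff₀ hT]
      linarith [H₀ T h0]
    · intro x y hxy
      rw [← hcC]
      exact corr_diff hh.1 hb hT fun t => hu' _ _ (by rwa [add_sub_add_right_eq_sub])
    · intro a
      obtain ⟨τ, h1, h2⟩ := hap' a
      refine ⟨τ, h1, fun x => ?_⟩
      rw [← hcC]
      refine corr_diff hh.1 hb hT fun t => ?_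
      rw [sub_add_eq_add_sub]
      exact (h2 (x + t)).le
  obtain ⟨σ, hσ, hσ1⟩ : ∃ σ : ℝ, 0 < σ ∧ 4 * σ ^ 2 < c₁ := by
    refine ⟨min 1 (c₁ / 8), by positivity, ?_⟩
    have h1 := min_le_left 1 (c₁ / 8)
    have h2 := min_le_right 1 (c₁ / 8)
    have h3 : 0 < min 1 (c₁ / 8) := by positivity
    nlinarith
  have hσC : σ / C * C = σ := by field_simp
  -- `T` is a large almost period, so `integral_corr_le` bounds the same mean by `4 * σ ^ 2 < c₁`
  obtain ⟨T₂, H₂⟩ := unif_all hh hz (show 0 < σ / C by positivity)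
  obtain ⟨l₂, hl₂, hap₂⟩ := hh.2 (σ / C) (by positivity)
  obtain ⟨T, ⟨hT, -⟩, hTap⟩ := hap₂ (max T₀ (max T₁ T₂))
  simp only [max_le_iff] at hT
  obtain ⟨t0, t1, t2⟩ := hT
  have hT := hT₀.trans_le t0
  have k1 := integral_corr_le hh hb hT (fun x => (hTap x).le) fun ω => H₂ ω T t2 0
  have k2 := H₁ T t0 t1
  rw [hσC] at k1
  nlinarith

end APUniq


/-- if the Fourier series of a Bohr almost periodic function converges
uniformly, then it converges to the function itself. -/
theorem fourier_series_uniform_limit (f : ℝ → ℂ) (hf : BohrAP f) (Fhat : ℝ → ℂ)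
    (hFhat : ∀ ω : ℝ, HasFourierCoeff f ω (Fhat ω))
    (ωs : ℕ → ℝ) (hinj : Function.Injective ωs)
    (hsupp : ∀ ω' : ℝ, (∀ m : ℕ, ωs m ≠ ω') → Fhat ω' = 0)
    (g : ℝ → ℂ)
    (hconv : TendstoUniformly
      (fun N x => ∑ m ∈ Finset.range (N + 1),
        Fhat (ωs m) * Complex.exp (((2 * Real.pi * ωs m * x : ℝ) : ℂ) * Complex.I))
      g atTop) :
    ∀ x : ℝ, g x = f x := by
  set S : ℕ → ℝ → ℂ := fun N x => ∑ m ∈ Finset.range (N + 1), Fhat (ωs m) * APUniq.ex (ωs m) x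
    with hS
  change TendstoUniformly S g atTop at hconv
  have hSc : ∀ N, Continuous (S N) := fun N =>
    continuous_finsetSum _ fun m _ => continuous_const.mul (APUniq.ex_continuous _)
  have hgc : Continuous g := hconv.continuous (Eventually.of_forall hSc).frequently
  have hh : Continuous fun x => f x - g x := hf.1.sub hgc
  have happ : ∀ ε : ℝ, 0 < ε → ∃ N₀, ∀ N, N₀ ≤ N → ∀ x, ‖(f x - g x) - (f x - S N x)‖ ≤ ε := by
    intro ε hε
    obtain ⟨N₀, h⟩ := eventually_atTop.1 (Metric.tendstoUniformly_iff.1 hconv ε hε)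
    refine ⟨N₀, fun N hN x => ?_⟩
    rw [sub_sub_sub_cancel_left, norm_sub_rev, ← dist_eq_norm]
    exact (h N hN x).le
  have hap : BohrAP fun x => f x - g x := by
    refine APUniq.TB.bohr (APUniq.TB.of_approx fun ε hε => ?_) hh
    obtain ⟨N, h⟩ := happ ε hε
    exact ⟨_, (APUniq.TB.of_bohr hf).sub (APUniq.TB.sum _ _ _), h N le_rfl⟩
  have hcoef : ∀ ω, ∃ N₁, ∀ N, N₁ ≤ N → HasFourierCoeff (fun x => f x - S N x) ω 0 := by
    intro ω
    have key : ∃ N₁, ∀ N, N₁ ≤ N →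
        (∑ m ∈ Finset.range (N + 1), if ωs m = ω then Fhat (ωs m) else 0) = Fhat ω := by
      by_cases hω : ∃ m, ωs m = ω
      · obtain ⟨m, rfl⟩ := hω
        refine ⟨m, fun N hN => ?_⟩
        simp only [hinj.eq_iff]
        rw [Finset.sum_ite_eq', if_pos (Finset.mem_range.2 (by omega))]
      · push Not at hω
        refine ⟨0, fun N _ => ?_⟩
        rw [hsupp ω hω]
        exact Finset.sum_eq_zero fun m _ => if_neg (hω m)
    obtain ⟨N₁, h⟩ := key
    refine ⟨N₁, fun N hN => ?_⟩
    have := APUniq.hfc_sub hf.1 (hSc N) (hFhat ω)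
      (APUniq.hfc_sum (Finset.range (N + 1)) (fun m => Fhat (ωs m)) ωs ω)
    rwa [h N hN, sub_self] at this
  have hzero : ∀ ω, APUniq.ZeroMean (fun x => f x - g x) ω := by
    intro ω
    refine APUniq.zeroMean_of_approx hh fun ε hε => ?_
    obtain ⟨N₀, h0⟩ := happ ε hε
    obtain ⟨N₁, h1⟩ := hcoef (-ω)
    exact ⟨_, hf.1.sub (hSc _), h0 _ (le_max_left N₀ N₁), h1 _ (le_max_right N₀ N₁)⟩
  exact fun x => (sub_eq_zero.1 (APUniq.uniqueness hap hzero x)).symm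
end
end

section
/- Let f : ℝ → ℂ be Bohr almost periodic with Fourier coefficient function \hat f. Then f is limit periodic if and only if there exists ω ∈ ℝ such that every frequency ω′ with \hat f(ω′) ≠ 0 satisfies ω′ = q·ω for some rational number q. -/
/-!
If `f` is limit periodic, a periodic `g` that is uniformly closer to `f` than `‖f̂(ω)‖` must have
`ω` among its frequencies, so `ω P ∈ ℤ` for its period `P`; applied to two frequencies at once,
with the same `g`, this shows that they are commensurable (`LimitPeriodic.exists_base`).

Conversely, let all frequencies of `f` lie in `ℚω`. The translates of `f` are totally bounded for
the sup norm, so their closed convex hull `K` is compact. A cluster point `h_k ∈ K` of the averages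
of `f` along `(k! / ω)ℤ` is periodic and retains exactly the Fourier coefficients of `f` at
frequencies in `(ω / k!)ℤ`. Any cluster point of the sequence `h_k` in `K` therefore has the same
Fourier coefficients as `f`, hence equals `f` by Bohr's uniqueness theorem (`BohrAP.eq_zero`), and
a subsequence of the `h_k` converges uniformly to `f` (`limitPeriodic_of_base`).

For the uniqueness theorem, let `d` be almost periodic with `d̂ = 0`. The means of `d` against
characters over `[0, T]` tend to zero uniformly in the frequency (`small_uniform`): locally in the
frequency because one good window length controls all longer ones, and at high frequencies by
uniform continuity. Take `T` to be a large almost period and let `D` be the `T`-periodization of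
`d`. The Fourier coefficients of the autocorrelation of `D` are the `|c_k|²`, so Parseval gives
`T⁻¹ ∫ |autocorr|² = ∑ |c_k|⁴ ≤ sup |c_k|² ∑ |c_k|²`, which is small. On the other hand the
autocorrelation is close to the mean of `|d|²` at every almost period of `d`, and these have
positive lower density; so the mean of `|d|²` is small, which forces `d = 0`.
-/

open MeasureTheory Filter Topology
open scoped ENNReal NNReal

noncomputable section

/-! ### Fourier coefficients and the easy direction -/

/-- The conjugate character `x ↦ e^{-2πiωx}`. -/
def ew (ω x : ℝ) : ℂ := Complex.exp (((-(2 * Real.pi * ω * x) : ℝ) : ℂ) * Complex.I)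

lemma ew_norm (ω x : ℝ) : ‖ew ω x‖ = 1 := Complex.norm_exp_ofReal_mul_I _

lemma ew_add (ω x y : ℝ) : ew ω (x + y) = ew ω x * ew ω y := by
  unfold ew
  rw [← Complex.exp_add]
  congr 1
  push_cast
  ring

lemma ew_neg_mul (ω x : ℝ) : ew ω (-x) * ew ω x = 1 := by
  rw [← ew_add]
  simp [ew]

lemma ew_continuous (ω : ℝ) : Continuous (ew ω) := by
  unfold ew
  fun_prop

lemma ew_eq_one_iff (ω x : ℝ) : ew ω x = 1 ↔ ∃ n : ℤ, ω * x = n := by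
  unfold ew
  rw [Complex.exp_eq_one_iff]
  have hpi : (Real.pi : ℂ) ≠ 0 := by exact_mod_cast Real.pi_ne_zero
  constructor
  · rintro ⟨n, hn⟩
    refine ⟨-n, ?_⟩
    have h2 : (2 * Real.pi * Complex.I) * ((ω : ℂ) * x) = (2 * Real.pi * Complex.I) * (-n) := by
      push_cast at hn
      linear_combination -hn
    have h3 : (ω : ℂ) * x = -n :=
      mul_left_cancel₀ (by simp [hpi]) h2
    exact_mod_cast h3
  · rintro ⟨n, hn⟩
    refine ⟨-n, ?_⟩
    have : (ω : ℂ) * x = n := by exact_mod_cast hn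
    push_cast
    linear_combination (-2 * Real.pi * Complex.I) * this

lemma norm_integral_shift_sub_le {h : ℝ → ℂ} (hc : Continuous h) {C : ℝ} (hC : ∀ x, ‖h x‖ ≤ C)
    (a b s : ℝ) : ‖(∫ x in (a + s)..(b + s), h x) - ∫ x in a..b, h x‖ ≤ 2 * C * |s| := by
  have hi : ∀ a b : ℝ, IntervalIntegrable h volume a b := fun a b => hc.intervalIntegrable a b
  have h1 := intervalIntegral.integral_add_adjacent_intervals (hi a (a + s)) (hi (a + s) (b + s))
  have h2 := intervalIntegral.integral_add_adjacent_intervals (hi a b) (hi b (b + s))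
  have h3 : (∫ x in (a + s)..(b + s), h x) - ∫ x in a..b, h x
      = (∫ x in b..(b + s), h x) - ∫ x in a..(a + s), h x := by
    linear_combination h1 - h2
  rw [h3]
  have h4 := intervalIntegral.norm_integral_le_of_norm_le_const (a := b) (b := b + s)
    (fun x _ => hC x)
  have h5 := intervalIntegral.norm_integral_le_of_norm_le_const (a := a) (b := a + s)
    (fun x _ => hC x)
  simp only [add_sub_cancel_left] at h4 h5
  linarith [norm_sub_le (∫ x in b..(b + s), h x) (∫ x in a..(a + s), h x)]

lemma norm_avg_le {h : ℝ → ℂ} {C : ℝ} (hC : ∀ x, ‖h x‖ ≤ C) (ω : ℝ) {L : ℝ} (hL : 0 < L) :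
    ‖(2 * (L : ℂ))⁻¹ * ∫ x in (-L)..L, h x * ew ω x‖ ≤ C := by
  have h4 := intervalIntegral.norm_integral_le_of_norm_le_const (a := -L) (b := L) (C := C)
    (f := fun x => h x * ew ω x) (fun x _ => by simpa [ew_norm] using hC x)
  rw [norm_mul, norm_inv]
  have : ‖2 * (L : ℂ)‖ = 2 * L := by simp [abs_of_pos hL]
  rw [this, inv_mul_le_iff₀ (by positivity)]
  rw [abs_of_pos (by linarith)] at h4
  linarith

lemma HasFourierCoeff.linear {f g : ℝ → ℂ} (hf : Continuous f) (hg : Continuous g) {ω : ℝ}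
    {c d : ℂ} (h1 : HasFourierCoeff f ω c) (h2 : HasFourierCoeff g ω d) (a b : ℂ) :
    HasFourierCoeff (fun x => a * f x + b * g x) ω (a * c + b * d) := by
  have := (h1.const_mul a).add (h2.const_mul b)
  refine this.congr fun L => ?_
  change a * ((2 * (L : ℂ))⁻¹ * ∫ x in (-L)..L, f x * ew ω x)
    + b * ((2 * (L : ℂ))⁻¹ * ∫ x in (-L)..L, g x * ew ω x)
    = (2 * (L : ℂ))⁻¹ * ∫ x in (-L)..L, (a * f x + b * g x) * ew ω x
  have hE := ew_continuous ω
  have e1 : ∫ x in (-L)..L, (a * f x + b * g x) * ew ω x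
      = a * (∫ x in (-L)..L, f x * ew ω x) + b * ∫ x in (-L)..L, g x * ew ω x := by
    rw [← intervalIntegral.integral_const_mul, ← intervalIntegral.integral_const_mul,
      ← intervalIntegral.integral_add]
    · congr 1; ext x; ring
    · exact (by fun_prop : Continuous fun x => a * (f x * ew ω x)).intervalIntegrable _ _
    · exact (by fun_prop : Continuous fun x => b * (g x * ew ω x)).intervalIntegrable _ _
  rw [e1]
  ring

/-- The Fourier coefficient at a fixed frequency is `1`-Lipschitz for the sup norm. -/
lemma HasFourierCoeff.norm_sub_le {f g : ℝ → ℂ} (hf : Continuous f) (hg : Continuous g) {ω : ℝ}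
    {c d : ℂ} (h1 : HasFourierCoeff f ω c) (h2 : HasFourierCoeff g ω d) {ε : ℝ}
    (hε : ∀ x, ‖f x - g x‖ ≤ ε) : ‖c - d‖ ≤ ε := by
  have h := h1.linear hf hg h2 1 (-1)
  have h' : HasFourierCoeff (fun x => f x - g x) ω (c - d) := by
    simpa [sub_eq_add_neg] using h
  exact le_of_tendsto h'.norm (by
    filter_upwards [eventually_gt_atTop 0] with L hL using norm_avg_le hε ω hL)

lemma HasFourierCoeff.of_approx {f : ℝ → ℂ} (hf : Continuous f) {ω : ℝ} {c : ℂ}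
    (h : ∀ ε : ℝ, 0 < ε → ∃ g : ℝ → ℂ, Continuous g ∧ HasFourierCoeff g ω c ∧
      ∀ x, ‖f x - g x‖ ≤ ε) : HasFourierCoeff f ω c := by
  refine Metric.tendsto_atTop.2 fun ε hε => ?_
  obtain ⟨g, hg, hgc, hfg⟩ := h (ε / 2) (by positivity)
  obtain ⟨N, hN⟩ := Metric.tendsto_atTop.1 hgc (ε / 2) (by positivity)
  refine ⟨max N 1, fun L hL => ?_⟩
  have h0 : (0 : ℝ) < L := lt_of_lt_of_le one_pos ((le_max_right _ _).trans hL)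
  have h1 := hN L ((le_max_left _ _).trans hL)
  have h2 := norm_avg_le hfg ω h0
  have hE := ew_continuous ω
  have e1 : ∫ x in (-L)..L, (f x - g x) * ew ω x
      = (∫ x in (-L)..L, f x * ew ω x) - ∫ x in (-L)..L, g x * ew ω x := by
    rw [← intervalIntegral.integral_sub]
    · congr 1; ext x; ring
    · exact (by fun_prop : Continuous fun x => f x * ew ω x).intervalIntegrable _ _
    · exact (by fun_prop : Continuous fun x => g x * ew ω x).intervalIntegrable _ _
  rw [e1, mul_sub, ← dist_eq_norm] at h2
  have h3 : dist ((2 * (L : ℂ))⁻¹ * ∫ x in (-L)..L, g x * ew ω x) c < ε / 2 := h1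
  have := dist_triangle ((2 * (L : ℂ))⁻¹ * ∫ x in (-L)..L, f x * ew ω x)
    ((2 * (L : ℂ))⁻¹ * ∫ x in (-L)..L, g x * ew ω x) c
  change dist ((2 * (L : ℂ))⁻¹ * ∫ x in (-L)..L, f x * ew ω x) c < ε
  linarith

lemma integral_translate (f : ℝ → ℂ) (ω t a b : ℝ) :
    ∫ x in a..b, f (x + t) * ew ω x = ew ω (-t) * ∫ x in (a + t)..(b + t), f x * ew ω x := by
  rw [← intervalIntegral.integral_comp_add_right (fun x => f x * ew ω x) t,
    ← intervalIntegral.integral_const_mul]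
  congr 1
  ext x
  rw [ew_add]
  linear_combination (- f (x + t) * ew ω x) * ew_neg_mul ω t

lemma tendsto_const_div_two_mul (K : ℝ) : Tendsto (fun L : ℝ => K / (2 * L)) atTop (𝓝 0) :=
  tendsto_const_nhds.div_atTop (tendsto_id.const_mul_atTop two_pos)

/-- Translating by `t` rotates the Fourier coefficient at `ω` by `e^{2πiωt}`. -/
lemma HasFourierCoeff.translate {f : ℝ → ℂ} (hf : Continuous f) {C : ℝ} (hC : ∀ x, ‖f x‖ ≤ C)
    {ω : ℝ} {c : ℂ} (h : HasFourierCoeff f ω c) (t : ℝ) :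
    HasFourierCoeff (fun x => f (x + t)) ω (ew ω (-t) * c) := by
  have hd : Tendsto (fun L : ℝ => (2 * (L : ℂ))⁻¹ * ((∫ x in (-L + t)..(L + t), f x * ew ω x)
      - ∫ x in (-L)..L, f x * ew ω x)) atTop (𝓝 0) := by
    refine squeeze_zero_norm' ?_ (tendsto_const_div_two_mul (2 * C * |t|))
    filter_upwards [eventually_gt_atTop 0] with L hL
    have hE := ew_continuous ω
    have := norm_integral_shift_sub_le (h := fun x => f x * ew ω x) (by fun_prop) (C := C)
      (fun x => by simpa [ew_norm] using hC x) (-L) L t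
    rw [norm_mul, norm_inv]
    have h2 : ‖2 * (L : ℂ)‖ = 2 * L := by simp [abs_of_pos hL]
    rw [h2, inv_mul_eq_div]
    gcongr
  have := (hd.add h).const_mul (ew ω (-t))
  rw [zero_add] at this
  refine this.congr fun L => ?_
  change _ = (2 * (L : ℂ))⁻¹ * ∫ x in (-L)..L, f (x + t) * ew ω x
  rw [integral_translate]
  change ew ω (-t) * (_ + (2 * (L : ℂ))⁻¹ * ∫ x in (-L)..L, f x * ew ω x) = _
  ring

/-- A continuous `P`-periodic function has vanishing coefficient at every frequency
outside `P⁻¹ℤ`. -/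
lemma hasFourierCoeff_zero_of_periodic {g : ℝ → ℂ} (hg : Continuous g) {P : ℝ} (hP : 0 < P)
    (hper : Function.Periodic g P) {ω : ℝ} (hω : ¬ ∃ n : ℤ, ω * P = n) :
    HasFourierCoeff g ω 0 := by
  obtain ⟨C, hC⟩ : ∃ C, ∀ x, ‖g x‖ ≤ C := by
    obtain ⟨C, hC⟩ := (isCompact_Icc (a := (0 : ℝ)) (b := P)).exists_bound_of_continuousOn
      hg.continuousOn
    refine ⟨C, fun x => ?_⟩
    obtain ⟨y, hy, hxy⟩ := hper.exists_mem_Ico₀ hP x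
    rw [hxy]
    exact hC y ⟨hy.1, hy.2.le⟩
  have hz : ew ω P ≠ 1 := fun h => hω ((ew_eq_one_iff ω P).1 h)
  have hE := ew_continuous ω
  -- Shifting the window by `P` multiplies the integral by `ew ω P`, up to a bounded error.
  have key : ∀ L : ℝ, ‖(ew ω P - 1) * ∫ x in (-L)..L, g x * ew ω x‖ ≤ 2 * C * |P| := by
    intro L
    have h1 := norm_integral_shift_sub_le (h := fun x => g x * ew ω x) (by fun_prop) (C := C)
      (fun x => by simpa [ew_norm] using hC x) (-L) L P
    have h2 := integral_translate g ω P (-L) L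
    simp only [hper _] at h2
    convert h1 using 2
    linear_combination (ew ω P) * h2 + (∫ x in (-L + P)..(L + P), g x * ew ω x) * ew_neg_mul ω P
  have hpos : 0 < ‖ew ω P - 1‖ := norm_pos_iff.2 (sub_ne_zero.2 hz)
  refine squeeze_zero_norm' ?_ (tendsto_const_div_two_mul (2 * C * |P| / ‖ew ω P - 1‖))
  filter_upwards [eventually_gt_atTop 0] with L hL
  change ‖(2 * (L : ℂ))⁻¹ * ∫ x in (-L)..L, g x * ew ω x‖ ≤ _
  have h2 : ‖2 * (L : ℂ)‖ = 2 * L := by simp [abs_of_pos hL]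
  rw [norm_mul, norm_inv, h2, inv_mul_eq_div]
  have h3 := key L
  rw [norm_mul] at h3
  gcongr
  rw [le_div_iff₀ hpos]
  linarith

/-- Any two frequencies of a limit periodic function are commensurable. -/
lemma LimitPeriodic.exists_base {f : ℝ → ℂ} (hf : Continuous f) {Fhat : ℝ → ℂ}
    (hF : ∀ ω : ℝ, HasFourierCoeff f ω (Fhat ω)) (h : LimitPeriodic f) :
    ∃ ω : ℝ, ∀ ω' : ℝ, Fhat ω' ≠ 0 → ∃ q : ℚ, ω' = (q : ℝ) * ω := by
  obtain ⟨g, hgc, hgp, hlim⟩ := h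
  choose P hP hper using hgp
  have key : ∀ ω, Fhat ω ≠ 0 → ∀ᶠ j in atTop, ∃ n : ℤ, ω * P j = n := by
    intro ω hω
    have hpos : 0 < ‖Fhat ω‖ := norm_pos_iff.2 hω
    filter_upwards [Metric.tendstoUniformly_iff.1 hlim (‖Fhat ω‖ / 2) (by positivity)] with j hj
    by_contra hcon
    have h0 := hasFourierCoeff_zero_of_periodic (hgc j) (hP j) (hper j) hcon
    have := (hF ω).norm_sub_le hf (hgc j) h0 (ε := ‖Fhat ω‖ / 2)
      (fun x => by rw [← dist_eq_norm]; exact (hj x).le)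
    rw [sub_zero] at this
    linarith
  by_cases hex : ∃ ω, ω ≠ 0 ∧ Fhat ω ≠ 0
  · obtain ⟨ω, hω0, hω⟩ := hex
    refine ⟨ω, fun ω' hω' => ?_⟩
    obtain ⟨j, ⟨n, hn⟩, ⟨m, hm⟩⟩ := ((key ω hω).and (key ω' hω')).exists
    refine ⟨(m : ℚ) / n, ?_⟩
    have hPj := (hP j).ne'
    have hn0 : (n : ℝ) ≠ 0 := by rw [← hn]; exact mul_ne_zero hω0 hPj
    push_cast
    rw [← hm, div_mul_eq_mul_div, eq_div_iff hn0, ← hn]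
    ring
  · push Not at hex
    refine ⟨0, fun ω' hω' => ⟨0, ?_⟩⟩
    by_contra h0
    exact hω' (hex ω' (by simpa using h0))

/-! ### Almost periodic functions and the hull of translates -/

lemma BohrAP.exists_bound {f : ℝ → ℂ} (hf : BohrAP f) : ∃ C, 0 < C ∧ ∀ x, ‖f x‖ ≤ C := by
  obtain ⟨L, hL, h⟩ := hf.2 1 one_pos
  obtain ⟨C, hC⟩ := (isCompact_Icc (a := (0 : ℝ)) (b := L)).exists_bound_of_continuousOn
    hf.1.continuousOn
  refine ⟨|C| + 1, by positivity, fun x => ?_⟩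
  obtain ⟨τ, hτ, hx⟩ := h (x - L)
  have h1 := hC (x - τ) ⟨by linarith [hτ.2], by linarith [hτ.1]⟩
  have h2 := norm_sub_norm_le (f x) (f (x - τ))
  rw [norm_sub_rev] at h2
  linarith [hx x, le_abs_self C]

lemma BohrAP.unif {f : ℝ → ℂ} (hf : BohrAP f) {ε : ℝ} (hε : 0 < ε) :
    ∃ δ, 0 < δ ∧ ∀ x s : ℝ, |s| ≤ δ → ‖f (x + s) - f x‖ ≤ ε := by
  obtain ⟨L, hL, h⟩ := hf.2 (ε / 3) (by positivity)
  have huc := (isCompact_Icc (a := (-1 : ℝ)) (b := L + 1)).uniformContinuousOn_of_continuous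
    hf.1.continuousOn
  obtain ⟨δ, hδ, hu⟩ := Metric.uniformContinuousOn_iff.1 huc (ε / 3) (by positivity)
  refine ⟨min (δ / 2) 1, by positivity, fun x s hs => ?_⟩
  have hs1 : |s| ≤ δ / 2 := hs.trans (min_le_left _ _)
  have hs2 := abs_le.1 (hs.trans (min_le_right _ _))
  obtain ⟨τ, hτ, hx⟩ := h (x - L)
  have h1 := hu (x + s - τ) ⟨by linarith [hτ.2], by linarith [hτ.1]⟩ (x - τ)
    ⟨by linarith [hτ.2], by linarith [hτ.1]⟩ (by
      rw [Real.dist_eq]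
      have : x + s - τ - (x - τ) = s := by ring
      rw [this]; linarith)
  rw [dist_eq_norm] at h1
  have h2 := hx (x + s)
  have h3 := hx x
  rw [norm_sub_rev] at h2
  have e : f (x + s) - f x = (f (x + s) - f (x + s - τ)) + (f (x + s - τ) - f (x - τ))
    + (f (x - τ) - f x) := by ring
  rw [e]
  linarith [norm_add₃_le (a := f (x + s) - f (x + s - τ)) (b := f (x + s - τ) - f (x - τ))
    (c := f (x - τ) - f x)]

open BoundedContinuousFunction

/-- The translate `x ↦ g (x + t)` as a bounded continuous function. -/
def trB (g : ℝ →ᵇ ℂ) (t : ℝ) : ℝ →ᵇ ℂ :=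
  g.compContinuous ⟨fun x => x + t, by fun_prop⟩

@[simp] lemma trB_apply (g : ℝ →ᵇ ℂ) (t x : ℝ) : trB g t x = g (x + t) := rfl

/-- Bochner's observation: the orbit of an almost periodic function under translations is
totally bounded for the sup norm. -/
lemma totallyBounded_range_trB {F : ℝ →ᵇ ℂ} (hF : BohrAP F) :
    TotallyBounded (Set.range (trB F)) := by
  refine Metric.totallyBounded_iff.2 fun ε hε => ?_
  obtain ⟨L, hL, h⟩ := hF.2 (ε / 3) (by positivity)
  have hcont : Continuous (trB F) := by
    refine Metric.continuous_iff.2 fun t η hη => ?_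
    obtain ⟨δ, hδ, hu⟩ := hF.unif (ε := η / 2) (by positivity)
    refine ⟨δ, hδ, fun s hs => ?_⟩
    refine lt_of_le_of_lt ((BoundedContinuousFunction.dist_le (by positivity)).2 fun x => ?_)
      (half_lt_self hη)
    rw [dist_eq_norm, trB_apply, trB_apply]
    have := hu (x + t) (s - t) (by rw [← Real.dist_eq]; exact hs.le)
    rwa [show x + t + (s - t) = x + s by ring] at this
  have htb := ((isCompact_Icc (a := (0 : ℝ)) (b := L)).image hcont).totallyBounded
  obtain ⟨S, hS, hcov⟩ := Metric.totallyBounded_iff.1 htb (ε / 2) (by positivity)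
  refine ⟨S, hS, ?_⟩
  rintro _ ⟨t, rfl⟩
  obtain ⟨τ, hτ, hx⟩ := h (t - L)
  have hmem := hcov ⟨t - τ, ⟨by linarith [hτ.2], by linarith [hτ.1]⟩, rfl⟩
  simp only [Set.mem_iUnion, Metric.mem_ball] at hmem ⊢
  obtain ⟨y, hy, hd⟩ := hmem
  refine ⟨y, hy, ?_⟩
  have h1 : dist (trB F t) (trB F (t - τ)) ≤ ε / 3 := by
    refine (BoundedContinuousFunction.dist_le (by positivity)).2 fun x => ?_
    rw [dist_comm, dist_eq_norm, trB_apply, trB_apply]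
    have := (hx (x + t)).le
    rwa [show x + t - τ = x + (t - τ) by ring] at this
  linarith [dist_triangle (trB F t) (trB F (t - τ)) y]

lemma isCompact_closure_convexHull_range_trB {F : ℝ →ᵇ ℂ} (hF : BohrAP F) :
    IsCompact (closure (convexHull ℝ (Set.range (trB F)))) :=
  (totallyBounded_range_trB hF).convexHull.closure.isCompact_of_isClosed isClosed_closure

lemma isClosed_coeff (ω : ℝ) (c : ℂ) : IsClosed {g : ℝ →ᵇ ℂ | HasFourierCoeff g ω c} := by
  refine isClosed_of_closure_subset fun g hg => ?_
  refine HasFourierCoeff.of_approx g.continuous fun ε hε => ?_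
  obtain ⟨g', hg', hd⟩ := Metric.mem_closure_iff.1 hg ε hε
  refine ⟨g', g'.continuous, hg', fun x => ?_⟩
  rw [← dist_eq_norm]
  exact (dist_coe_le_dist x).trans hd.le

lemma convex_coeff (ω : ℝ) (c : ℂ) : Convex ℝ {g : ℝ →ᵇ ℂ | HasFourierCoeff g ω c} := by
  intro g hg g' hg' a b _ _ hab
  have := HasFourierCoeff.linear g.continuous g'.continuous hg hg' a b
  have hc : (a : ℂ) * c + b * c = c := by
    rw [← add_mul, ← Complex.ofReal_add, hab, Complex.ofReal_one, one_mul]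
  rw [hc] at this
  have e : (fun x => (a : ℂ) * g x + b * g' x) = ⇑(a • g + b • g') := by
    ext x
    simp
  rw [e] at this
  exact this

lemma isClosed_almostPeriod (τ ε : ℝ) :
    IsClosed {g : ℝ →ᵇ ℂ | ∀ x, ‖g (x - τ) - g x‖ ≤ ε} := by
  simp only [Set.ofPred_forall]
  refine isClosed_iInter fun x => isClosed_le ?_ continuous_const
  exact ((continuous_eval_const (x - τ)).sub (continuous_eval_const x)).norm

lemma convex_almostPeriod (τ ε : ℝ) :
    Convex ℝ {g : ℝ →ᵇ ℂ | ∀ x, ‖g (x - τ) - g x‖ ≤ ε} := by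
  intro g hg g' hg' a b ha hb hab x
  have e : (a • g + b • g') (x - τ) - (a • g + b • g') x
      = a • (g (x - τ) - g x) + b • (g' (x - τ) - g' x) := by
    simp only [BoundedContinuousFunction.add_apply, BoundedContinuousFunction.smul_apply, smul_sub]
    abel
  rw [e]
  calc _ ≤ ‖a • (g (x - τ) - g x)‖ + ‖b • (g' (x - τ) - g' x)‖ := norm_add_le _ _
    _ = a * ‖g (x - τ) - g x‖ + b * ‖g' (x - τ) - g' x‖ := by
      rw [norm_smul, norm_smul, Real.norm_of_nonneg ha, Real.norm_of_nonneg hb]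
    _ ≤ a * ε + b * ε := by
      gcongr
      · exact hg x
      · exact hg' x
    _ = ε := by rw [← add_mul, hab, one_mul]

lemma closure_convexHull_subset {S A : Set (ℝ →ᵇ ℂ)} (h : S ⊆ A) (hc : Convex ℝ A)
    (hA : IsClosed A) : closure (convexHull ℝ S) ⊆ A :=
  closure_minimal (convexHull_min h hc) hA

/-- Averaging `F` along `Lℤ` yields an `L`-periodic function in the closed convex hull of the
translates of `F` by multiples of `L`; it is a cluster point of the partial averages. -/
lemma exists_periodic_mem_hull {F : ℝ →ᵇ ℂ} (hF : BohrAP F) (L : ℝ) :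
    ∃ h ∈ closure (convexHull ℝ (Set.range fun m : ℕ => trB F (m * L))),
      Function.Periodic h L := by
  set S := Set.range fun m : ℕ => trB F (m * L) with hS
  have hsub : closure (convexHull ℝ S) ⊆ closure (convexHull ℝ (Set.range (trB F))) :=
    closure_mono (convexHull_mono (by rintro _ ⟨m, rfl⟩; exact ⟨_, rfl⟩))
  have hcomp : IsCompact (closure (convexHull ℝ S)) :=
    (isCompact_closure_convexHull_range_trB hF).of_isClosed_subset isClosed_closure hsub
  set A : ℕ → (ℝ →ᵇ ℂ) := fun n =>
    ∑ m ∈ Finset.range (n + 1), ((n : ℝ) + 1)⁻¹ • trB F (m * L) with hA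
  have hmem : ∀ n, A n ∈ closure (convexHull ℝ S) := fun n => subset_closure <|
    (convex_convexHull ℝ S).sum_mem (fun _ _ => by positivity)
      (by simp; field_simp) (fun m _ => subset_convexHull ℝ S ⟨m, rfl⟩)
  obtain ⟨h, hh, φ, hφ, hlim⟩ := hcomp.tendsto_subseq hmem
  refine ⟨h, hh, fun x => ?_⟩
  have ht : ∀ y, Tendsto (fun n => A (φ n) y) atTop (𝓝 (h y)) := fun y =>
    ((continuous_eval_const y).tendsto h).comp hlim
  have hdiff := (ht (x + L)).sub (ht x)
  have heq : ∀ n y, A n y = ((n : ℝ) + 1)⁻¹ • ∑ m ∈ Finset.range (n + 1), F (y + m * L) := by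
    intro n y
    simp only [hA, BoundedContinuousFunction.coe_sum, Finset.sum_apply,
      BoundedContinuousFunction.smul_apply, trB_apply, Finset.smul_sum]
  -- The difference of consecutive translates of an average telescopes.
  have hzero : Tendsto (fun n => A n (x + L) - A n x) atTop (𝓝 0) := by
    have hb : ∀ n, ‖A n (x + L) - A n x‖ ≤ (2 * ‖F‖) * (1 / ((n : ℝ) + 1)) := by
      intro n
      have hs : ∑ m ∈ Finset.range (n + 1), F (x + L + m * L)
          - ∑ m ∈ Finset.range (n + 1), F (x + m * L) = F (x + (n + 1 : ℕ) * L) - F x := by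
        rw [← Finset.sum_sub_distrib]
        have := Finset.sum_range_sub (fun m : ℕ => F (x + m * L)) (n + 1)
        simp only [Nat.cast_zero, zero_mul, add_zero] at this
        rw [← this]
        refine Finset.sum_congr rfl fun m _ => ?_
        congr 2
        push_cast
        ring
      rw [heq, heq, ← smul_sub, hs, norm_smul, Real.norm_of_nonneg (by positivity), mul_comm,
        one_div]
      gcongr
      refine (norm_sub_le _ _).trans ?_
      linarith [F.norm_coe_le_norm (x + (n + 1 : ℕ) * L), F.norm_coe_le_norm x]
    refine squeeze_zero_norm hb ?_
    simpa using tendsto_one_div_add_atTop_nhds_zero_nat.const_mul (2 * ‖F‖)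
  have := tendsto_nhds_unique hdiff (hzero.comp hφ.tendsto_atTop)
  exact sub_eq_zero.1 this


/-! ### Uniform smallness of the means against characters -/

/-- If the coefficient at `ξ` vanishes, then windows of a suitable fixed length `T` have small
mean against `ew ξ`, uniformly in the position of the window. -/
lemma exists_window {d : ℝ → ℂ} (hd : BohrAP d) {ξ : ℝ} (h0 : HasFourierCoeff d ξ 0)
    {η : ℝ} (hη : 0 < η) :
    ∃ T, 0 < T ∧ ∀ a, ‖∫ x in a..(a + T), d x * ew ξ x‖ ≤ η * T := by
  obtain ⟨C, hC0, hC⟩ := hd.exists_bound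
  obtain ⟨l, hl, hper⟩ := hd.2 (η / 4) (by positivity)
  have hE := ew_continuous ξ
  have hdc := hd.1
  obtain ⟨N, hN⟩ := Metric.tendsto_atTop.1 h0 (η / 4) (by positivity)
  set L := max (max N 1) (4 * C * l / η) with hLdef
  have hLN : N ≤ L := (le_max_left _ _).trans (le_max_left _ _)
  have hL1 : 1 ≤ L := (le_max_right _ _).trans (le_max_left _ _)
  have hLC : 4 * C * l ≤ L * η := (div_le_iff₀ hη).1 (le_max_right _ _)
  refine ⟨2 * L, by linarith, fun a => ?_⟩
  obtain ⟨τ, hτ, hx⟩ := hper (a + L)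
  have h1 : ‖∫ x in (-L)..L, d x * ew ξ x‖ ≤ η / 4 * (2 * L) := by
    have h := hN L hLN
    rw [dist_zero_right, norm_mul, norm_inv] at h
    have h2 : ‖2 * (L : ℂ)‖ = 2 * L := by simp [abs_of_pos (by linarith : 0 < L)]
    rw [h2, inv_mul_lt_iff₀ (by linarith)] at h
    rw [mul_comm]
    exact h.le
  have h2 := norm_integral_shift_sub_le (h := fun x => d x * ew ξ x) (by fun_prop) (C := C)
      (fun x => by simpa [ew_norm] using hC x) a (a + 2 * L) (τ - L - a)
  rw [abs_of_nonneg (by linarith [hτ.1]), show a + (τ - L - a) = -L + τ by ring,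
    show a + 2 * L + (τ - L - a) = L + τ by ring] at h2
  have h3 : ‖∫ x in (-L)..L, (d (x + τ) * ew ξ x - d x * ew ξ x)‖ ≤ η / 4 * |L - -L| := by
    refine intervalIntegral.norm_integral_le_of_norm_le_const fun x _ => ?_
    rw [← sub_mul, norm_mul, ew_norm, mul_one, norm_sub_rev]
    have := (hx (x + τ)).le
    rwa [add_sub_cancel_right] at this
  rw [intervalIntegral.integral_sub ((by fun_prop : Continuous fun x => d (x + τ) * ew ξ x
    ).intervalIntegrable _ _) ((by fun_prop : Continuous fun x => d x * ew ξ x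
    ).intervalIntegrable _ _), integral_translate, abs_of_pos (by linarith)] at h3
  have h4 : ‖∫ x in (-L + τ)..(L + τ), d x * ew ξ x‖ ≤ η / 4 * (2 * L) + η / 4 * (2 * L) := by
    have h5 := norm_sub_norm_le (ew ξ (-τ) * ∫ x in (-L + τ)..(L + τ), d x * ew ξ x)
      (∫ x in (-L)..L, d x * ew ξ x)
    rw [norm_mul, ew_norm, one_mul] at h5
    linarith
  have h6 := norm_sub_norm_le (∫ x in a..(a + 2 * L), d x * ew ξ x)
    (∫ x in (-L + τ)..(L + τ), d x * ew ξ x)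
  rw [norm_sub_rev] at h6
  have h7 : 2 * C * (τ - L - a) ≤ 2 * C * l := by
    gcongr
    linarith [hτ.2]
  nlinarith

lemma norm_ew_sub_le (ξ ξ' x : ℝ) : ‖ew ξ x - ew ξ' x‖ ≤ 2 * Real.pi * |ξ - ξ'| * |x| := by
  have h1 : ew ξ x - ew ξ' x
      = ew ξ' x * (Complex.exp (Complex.I * (-(2 * Real.pi * (ξ - ξ') * x) : ℝ)) - 1) := by
    rw [mul_sub, mul_one]
    congr 1
    unfold ew
    rw [← Complex.exp_add]
    congr 1
    push_cast
    ring
  rw [h1, norm_mul, ew_norm, one_mul]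
  refine Real.norm_exp_I_mul_ofReal_sub_one_le.trans ?_
  rw [Real.norm_eq_abs, abs_neg, abs_mul, abs_mul, abs_of_pos Real.two_pi_pos]

/-- A bound on windows of length `T₁` propagates to all long windows. -/
lemma norm_integral_le_of_window {h : ℝ → ℂ} (hc : Continuous h) {C : ℝ} (hC : ∀ x, ‖h x‖ ≤ C)
    {T₁ η : ℝ} (hT₁ : 0 < T₁) (hη : 0 < η) (hw : ∀ a, ‖∫ x in a..(a + T₁), h x‖ ≤ η * T₁)
    {T : ℝ} (hT : 0 ≤ T) (hT' : C * T₁ ≤ η * T) : ‖∫ x in (0 : ℝ)..T, h x‖ ≤ 2 * η * T := by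
  have hi : ∀ a b : ℝ, IntervalIntegrable h volume a b := fun a b => hc.intervalIntegrable a b
  have hn : ∀ n : ℕ, ‖∫ x in (0 : ℝ)..(n * T₁), h x‖ ≤ η * (n * T₁) := by
    intro n
    induction n with
    | zero => simp
    | succ n ih =>
      have e : ((n + 1 : ℕ) : ℝ) * T₁ = n * T₁ + T₁ := by push_cast; ring
      rw [e, ← intervalIntegral.integral_add_adjacent_intervals (hi 0 (n * T₁)) (hi _ _)]
      refine (norm_add_le _ _).trans ?_
      linarith [hw (n * T₁)]
  have h1 : (⌊T / T₁⌋₊ : ℝ) * T₁ ≤ T := by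
    rw [← le_div_iff₀ hT₁]
    exact Nat.floor_le (by positivity)
  have h2 : T < (⌊T / T₁⌋₊ + 1 : ℝ) * T₁ := by
    rw [← div_lt_iff₀ hT₁]
    exact Nat.lt_floor_add_one _
  rw [← intervalIntegral.integral_add_adjacent_intervals (hi 0 (⌊T / T₁⌋₊ * T₁)) (hi _ _)]
  refine (norm_add_le _ _).trans ?_
  have h3 := intervalIntegral.norm_integral_le_of_norm_le_const (a := ⌊T / T₁⌋₊ * T₁) (b := T)
    (fun x _ => hC x)
  rw [abs_of_nonneg (by linarith)] at h3
  have hC0 : 0 ≤ C := (norm_nonneg _).trans (hC 0)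
  have h4 : C * (T - ⌊T / T₁⌋₊ * T₁) ≤ C * T₁ := by
    gcongr
    linarith
  have h5 : η * (⌊T / T₁⌋₊ * T₁) ≤ η * T := by gcongr
  linarith [hn ⌊T / T₁⌋₊]

lemma small_local {d : ℝ → ℂ} (hd : BohrAP d) {ξ : ℝ} (h0 : HasFourierCoeff d ξ 0)
    {η : ℝ} (hη : 0 < η) :
    ∃ ρ, 0 < ρ ∧ ∃ T₀, ∀ T, T₀ ≤ T → ∀ ξ', |ξ - ξ'| < ρ →
      ‖∫ x in (0 : ℝ)..T, d x * ew ξ' x‖ ≤ η * T := by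
  obtain ⟨C, hC0, hC⟩ := hd.exists_bound
  obtain ⟨T₁, hT₁, hw⟩ := exists_window hd h0 (η := η / 4) (by positivity)
  have hpi := Real.pi_pos
  have hdc := hd.1
  refine ⟨η / 4 / (C * (2 * Real.pi * T₁)), by positivity, max 0 (C * T₁ / (η / 2)),
    fun T hT ξ' hξ => ?_⟩
  have hE := ew_continuous ξ'
  have hE' := ew_continuous ξ
  have hw' : ∀ a, ‖∫ x in a..(a + T₁), d x * ew ξ' x‖ ≤ η / 2 * T₁ := by
    intro a
    -- Moving the window to the origin multiplies both integrals by a unimodular factor.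
    have tr : ∀ ζ : ℝ, ‖∫ x in a..(a + T₁), d x * ew ζ x‖
        = ‖∫ x in (0 : ℝ)..T₁, d (x + a) * ew ζ x‖ := by
      intro ζ
      rw [integral_translate, norm_mul, ew_norm, one_mul, zero_add, add_comm T₁ a]
    have h1 := hw a
    rw [tr] at h1 ⊢
    have h2 : ‖∫ x in (0 : ℝ)..T₁, (d (x + a) * ew ξ x - d (x + a) * ew ξ' x)‖
        ≤ η / 4 * |T₁ - 0| := by
      refine intervalIntegral.norm_integral_le_of_norm_le_const fun x hx => ?_
      rw [Set.uIoc_of_le hT₁.le] at hx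
      rw [← mul_sub, norm_mul]
      calc _ ≤ C * (2 * Real.pi * |ξ - ξ'| * |x|) := by
            gcongr
            · exact hC _
            · exact norm_ew_sub_le _ _ _
        _ ≤ C * (2 * Real.pi * (η / 4 / (C * (2 * Real.pi * T₁))) * T₁) := by
            have : |x| ≤ T₁ := by rw [abs_of_pos hx.1]; exact hx.2
            gcongr
        _ = η / 4 := by field_simp
    rw [intervalIntegral.integral_sub ((by fun_prop : Continuous fun x => d (x + a) * ew ξ x
      ).intervalIntegrable _ _) ((by fun_prop : Continuous fun x => d (x + a) * ew ξ' x
      ).intervalIntegrable _ _), sub_zero, abs_of_pos hT₁, norm_sub_rev] at h2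
    have h3 := norm_sub_norm_le (∫ x in (0 : ℝ)..T₁, d (x + a) * ew ξ' x)
      (∫ x in (0 : ℝ)..T₁, d (x + a) * ew ξ x)
    linarith
  have := norm_integral_le_of_window (h := fun x => d x * ew ξ' x) (by fun_prop) (C := C)
      (fun x => by simpa [ew_norm] using hC x) hT₁ (by positivity) hw' (T := T)
      ((le_max_left _ _).trans hT)
      (by
        have := (div_le_iff₀ (by positivity)).1 ((le_max_right _ _).trans hT)
        linarith)
  linarith

/-- Riemann–Lebesgue type bound: high frequencies are controlled by the modulus of continuity. -/
lemma small_high {d : ℝ → ℂ} (hd : BohrAP d) {η : ℝ} (hη : 0 < η) :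
    ∃ R, ∃ T₀, ∀ T, T₀ ≤ T → ∀ ξ, R ≤ |ξ| → ‖∫ x in (0 : ℝ)..T, d x * ew ξ x‖ ≤ η * T := by
  obtain ⟨C, hC0, hC⟩ := hd.exists_bound
  obtain ⟨δ, hδ, hu⟩ := hd.unif hη
  have hdc := hd.1
  refine ⟨1 / (2 * δ), max 0 (2 * C * δ / η), fun T hT ξ hξ => ?_⟩
  have hT0 : 0 ≤ T := (le_max_left _ _).trans hT
  have hTC := (div_le_iff₀ hη).1 ((le_max_right _ _).trans hT)
  have hE := ew_continuous ξ
  have hξpos : 0 < |ξ| := lt_of_lt_of_le (by positivity) hξ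
  have hξ0 : ξ ≠ 0 := abs_pos.1 hξpos
  -- A shift by half a wavelength changes the sign of the character.
  set s := 1 / (2 * ξ) with hs
  have hsδ : |s| ≤ δ := by
    rw [hs, abs_div, abs_one, abs_mul, abs_two, div_le_iff₀ (by positivity)]
    rw [div_le_iff₀ (by positivity)] at hξ
    linarith
  have hew : ew ξ (-s) = -1 := by
    unfold ew
    rw [show -(2 * Real.pi * ξ * -s) = Real.pi by rw [hs]; field_simp]
    exact Complex.exp_pi_mul_I
  have h1 := integral_translate d ξ s 0 T
  rw [hew] at h1
  have h2 := norm_integral_shift_sub_le (h := fun x => d x * ew ξ x) (by fun_prop) (C := C)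
      (fun x => by simpa [ew_norm] using hC x) 0 T s
  have h3 : ‖∫ x in (0 : ℝ)..T, (d (x + s) * ew ξ x - d x * ew ξ x)‖ ≤ η * |T - 0| := by
    refine intervalIntegral.norm_integral_le_of_norm_le_const fun x _ => ?_
    rw [← sub_mul, norm_mul, ew_norm, mul_one]
    exact hu x s hsδ
  rw [intervalIntegral.integral_sub ((by fun_prop : Continuous fun x => d (x + s) * ew ξ x
    ).intervalIntegrable _ _) ((by fun_prop : Continuous fun x => d x * ew ξ x
    ).intervalIntegrable _ _), h1, sub_zero, abs_of_nonneg hT0] at h3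
  set I := ∫ x in (0 : ℝ)..T, d x * ew ξ x
  set I' := ∫ x in (0 + s)..(T + s), d x * ew ξ x
  have h4 : ‖(2 : ℂ) * I‖ ≤ ‖-1 * I' - I‖ + ‖I' - I‖ := by
    have := norm_add_le (-1 * I' - I) (I' - I)
    rw [show -1 * I' - I + (I' - I) = -(2 * I) by ring, norm_neg] at this
    exact this
  rw [norm_mul, Complex.norm_ofNat] at h4
  have h5 : 2 * C * |s| ≤ 2 * C * δ := by gcongr
  nlinarith

/-- If all Fourier coefficients vanish, the means over `[0, T]` against characters tend to zero
uniformly in the frequency. -/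
lemma small_uniform {d : ℝ → ℂ} (hd : BohrAP d) (h0 : ∀ ξ, HasFourierCoeff d ξ 0)
    {η : ℝ} (hη : 0 < η) :
    ∃ T₀, ∀ T, T₀ ≤ T → ∀ ξ, ‖∫ x in (0 : ℝ)..T, d x * ew ξ x‖ ≤ η * T := by
  obtain ⟨R, T₁, h1⟩ := small_high hd hη
  have h2 : ∃ T₀, ∀ T, T₀ ≤ T → ∀ ξ ∈ Set.Icc (-R) R,
      ‖∫ x in (0 : ℝ)..T, d x * ew ξ x‖ ≤ η * T := by
    refine (isCompact_Icc (a := -R) (b := R)).induction_on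
      (p := fun s => ∃ T₀, ∀ T, T₀ ≤ T → ∀ ξ ∈ s, ‖∫ x in (0 : ℝ)..T, d x * ew ξ x‖ ≤ η * T)
      ⟨0, by simp⟩ ?_ ?_ ?_
    · rintro s t hst ⟨T₀, h⟩
      exact ⟨T₀, fun T hT ξ hξ => h T hT ξ (hst hξ)⟩
    · rintro s t ⟨T₀, h⟩ ⟨T₁, h'⟩
      refine ⟨max T₀ T₁, fun T hT ξ hξ => ?_⟩
      rcases hξ with hξ | hξ
      · exact h T ((le_max_left _ _).trans hT) ξ hξ
      · exact h' T ((le_max_right _ _).trans hT) ξ hξ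
    · intro ξ _
      obtain ⟨ρ, hρ, T₀, h⟩ := small_local hd (h0 ξ) hη
      refine ⟨Metric.ball ξ ρ, mem_nhdsWithin_of_mem_nhds (Metric.ball_mem_nhds _ hρ), T₀,
        fun T hT ξ' hξ' => h T hT ξ' ?_⟩
      rw [Metric.mem_ball, dist_comm, Real.dist_eq] at hξ'
      exact hξ'
  obtain ⟨T₂, h2⟩ := h2
  refine ⟨max T₁ T₂, fun T hT ξ => ?_⟩
  rcases le_total R |ξ| with h | h
  · exact h1 T ((le_max_left _ _).trans hT) ξ h
  · exact h2 T ((le_max_right _ _).trans hT) ξ (abs_le.1 h)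

/-! ### Recurrence, autocorrelation and Parseval -/

/-- The `ε`-almost periods of an almost periodic function contain intervals of a fixed length
`δ`, one in every interval of length `L`. -/
lemma BohrAP.recurrence {d : ℝ → ℂ} (hd : BohrAP d) {ε : ℝ} (hε : 0 < ε) :
    ∃ L δ, 0 < L ∧ 0 < δ ∧ ∀ a, ∃ s, a ≤ s ∧ s + δ ≤ a + L ∧
      ∀ x ∈ Set.Icc s (s + δ), ∀ t, ‖d (t + x) - d t‖ ≤ ε := by
  obtain ⟨l, hl, h⟩ := hd.2 (ε / 2) (by positivity)
  obtain ⟨δ, hδ, hu⟩ := hd.unif (ε := ε / 2) (by positivity)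
  refine ⟨l + δ, δ, by positivity, hδ, fun a => ?_⟩
  obtain ⟨τ, hτ, hx⟩ := h a
  refine ⟨τ, hτ.1, by linarith [hτ.2], fun x hx' t => ?_⟩
  have h1 := hx (t + x)
  have h2 := hu t (x - τ) (by rw [abs_of_nonneg (by linarith [hx'.1])]; linarith [hx'.2])
  rw [show t + (x - τ) = t + x - τ by ring] at h2
  rw [norm_sub_rev] at h1
  have := norm_sub_le_norm_sub_add_norm_sub (d (t + x)) (d (t + x - τ)) (d t)
  linarith

lemma integral_lower {φ : ℝ → ℝ} (h0 : ∀ x, 0 ≤ φ x) {T L δ κ : ℝ} (hL : 0 < L) (hδ : 0 < δ)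
    (hκ : 0 < κ) (hT : 2 * L ≤ T) (hi : ∀ a b, IntervalIntegrable φ volume a b)
    (h : ∀ a, ∃ s, a ≤ s ∧ s + δ ≤ a + L ∧ ∀ x ∈ Set.Icc s (s + δ), 0 ≤ x → x ≤ T → κ ≤ φ x) :
    κ * δ / (2 * L) * T ≤ ∫ x in (0 : ℝ)..T, φ x := by
  have hnn : ∀ a b, a ≤ b → 0 ≤ ∫ x in a..b, φ x := fun a b hab =>
    intervalIntegral.integral_nonneg hab fun x _ => h0 x
  have step : ∀ a, 0 ≤ a → a + L ≤ T → κ * δ ≤ ∫ x in a..(a + L), φ x := by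
    intro a ha haT
    obtain ⟨s, hs1, hs2, hs⟩ := h a
    have h1 : ∫ _ in s..(s + δ), κ ≤ ∫ x in s..(s + δ), φ x :=
      intervalIntegral.integral_mono_on (by linarith) intervalIntegrable_const (hi _ _)
        fun x hx => hs x hx (by linarith [hx.1]) (by linarith [hx.2])
    rw [intervalIntegral.integral_const, add_sub_cancel_left, smul_eq_mul] at h1
    rw [← intervalIntegral.integral_add_adjacent_intervals (hi a s) (hi s (a + L)),
      ← intervalIntegral.integral_add_adjacent_intervals (hi s (s + δ)) (hi (s + δ) (a + L))]
    linarith [hnn a s hs1, hnn _ _ hs2]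
  have hn : ∀ n : ℕ, n * L ≤ T → n * (κ * δ) ≤ ∫ x in (0 : ℝ)..(n * L), φ x := by
    intro n
    induction n with
    | zero => simp
    | succ n ih =>
      intro hnT
      have e : ((n + 1 : ℕ) : ℝ) * L = n * L + L := by push_cast; ring
      rw [e] at hnT ⊢
      rw [← intervalIntegral.integral_add_adjacent_intervals (hi 0 (n * L)) (hi _ _)]
      have h1 := ih (by linarith)
      have h2 := step (n * L) (by positivity) hnT
      push_cast
      linarith
  have hTpos : 0 < T := by linarith
  have h1 : (⌊T / L⌋₊ : ℝ) * L ≤ T := by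
    rw [← le_div_iff₀ hL]
    exact Nat.floor_le (by positivity)
  have h2 : T / L < (⌊T / L⌋₊ + 1 : ℝ) := Nat.lt_floor_add_one _
  rw [← intervalIntegral.integral_add_adjacent_intervals (hi 0 (⌊T / L⌋₊ * L)) (hi _ _)]
  have h3 := hn _ h1
  have h4 := hnn _ _ h1
  have h5 : 2 ≤ T / L := by rwa [le_div_iff₀ hL]
  have h6 : κ * δ / (2 * L) * T = κ * δ * (T / L / 2) := by field_simp
  have h7 : κ * δ * (T / L / 2) ≤ κ * δ * ⌊T / L⌋₊ := by
    gcongr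
    linarith
  linarith

lemma fourierCoeffOn_eq_ew {T : ℝ} (hT : 0 < T) (g : ℝ → ℂ) (k : ℤ) :
    fourierCoeffOn hT g k = (T : ℂ)⁻¹ * ∫ x in (0 : ℝ)..T, g x * ew (k / T) x := by
  rw [fourierCoeffOn_eq_integral, sub_zero, one_div, Complex.real_smul, Complex.ofReal_inv]
  congr 2
  ext x
  rw [smul_eq_mul, mul_comm]
  congr 1
  rw [fourier_coe_apply]
  unfold ew
  congr 1
  push_cast
  ring

/-- The autocorrelation `x ↦ T⁻¹ ∫₀ᵀ D (x + t) conj (D t) dt`. -/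
def autocorr (D : ℝ → ℂ) (T : ℝ) (x : ℝ) : ℂ :=
  (T : ℂ)⁻¹ * ∫ t in (0 : ℝ)..T, D (x + t) * (starRingEnd ℂ) (D t)

lemma autocorr_measurable {D : ℝ → ℂ} (hm : Measurable D) {T : ℝ} (hT : 0 < T) :
    StronglyMeasurable (autocorr D T) := by
  unfold autocorr
  simp only [intervalIntegral.integral_of_le hT.le]
  refine StronglyMeasurable.const_mul ?_ _
  refine StronglyMeasurable.integral_prod_right (f := fun x t => D (x + t) * (starRingEnd ℂ) (D t))
    (Measurable.stronglyMeasurable ?_)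
  exact (hm.comp (measurable_fst.add measurable_snd)).mul
    (Complex.continuous_conj.measurable.comp (hm.comp measurable_snd))

lemma norm_autocorr_le {D : ℝ → ℂ} {C : ℝ} (hC : ∀ x, ‖D x‖ ≤ C) {T : ℝ} (hT : 0 < T) (x : ℝ) :
    ‖autocorr D T x‖ ≤ C * C := by
  unfold autocorr
  have h := intervalIntegral.norm_integral_le_of_norm_le_const (a := 0) (b := T) (C := C * C)
    (f := fun t => D (x + t) * (starRingEnd ℂ) (D t)) (fun t _ => by
      rw [norm_mul, RCLike.norm_conj]
      exact mul_le_mul (hC _) (hC _) (norm_nonneg _) ((norm_nonneg _).trans (hC 0)))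
  rw [sub_zero, abs_of_pos hT] at h
  rw [norm_mul, norm_inv, Complex.norm_real, Real.norm_of_nonneg hT.le, inv_mul_le_iff₀ hT]
  linarith

lemma memLp_of_bdd {g : ℝ → ℂ} (hg : StronglyMeasurable g) {C : ℝ} (hC : ∀ x, ‖g x‖ ≤ C) (T : ℝ) :
    MemLp g 2 (volume.restrict (Set.Ioc 0 T)) :=
  MemLp.of_bound hg.aestronglyMeasurable C (ae_of_all _ hC)

lemma intervalIntegrable_of_bdd {E : Type*} [NormedAddCommGroup E] {g : ℝ → E}
    (hg : StronglyMeasurable g) {C : ℝ} (hC : ∀ x, ‖g x‖ ≤ C) (a b : ℝ) :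
    IntervalIntegrable g volume a b := by
  rw [intervalIntegrable_iff]
  exact Measure.integrableOn_of_bounded (M := C) (by simp) hg.aestronglyMeasurable
    (ae_of_all _ hC)

/-- Fourier coefficients of the autocorrelation are the squared moduli of those of `D`. -/
lemma fourierCoeffOn_autocorr {D : ℝ → ℂ} (hm : Measurable D) {C : ℝ} (hC : ∀ x, ‖D x‖ ≤ C)
    {T : ℝ} (hT : 0 < T) (hper : Function.Periodic D T) (k : ℤ) :
    ‖fourierCoeffOn hT (autocorr D T) k‖ = ‖fourierCoeffOn hT D k‖ ^ 2 := by
  rw [fourierCoeffOn_eq_ew, fourierCoeffOn_eq_ew]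
  set ξ : ℝ := k / T
  set I := ∫ x in (0 : ℝ)..T, D x * ew ξ x with hI
  have hewT : ew ξ T = 1 := (ew_eq_one_iff _ _).2 ⟨k, by simp [ξ, hT.ne']⟩
  have hperE : Function.Periodic (fun x => D x * ew ξ x) T := by
    intro x
    simp only [hper x, ew_add, hewT, mul_one]
  have hconj : ∀ t, ew ξ (-t) = (starRingEnd ℂ) (ew ξ t) := by
    intro t
    unfold ew
    rw [← Complex.exp_conj, map_mul, Complex.conj_I, Complex.conj_ofReal]
    congr 1
    push_cast
    ring
  have inner : ∀ t, ∫ x in (0 : ℝ)..T, D (x + t) * ew ξ x = (starRingEnd ℂ) (ew ξ t) * I := by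
    intro t
    rw [integral_translate, hconj, hI, add_comm T t, zero_add,
      hperE.intervalIntegral_add_eq t 0, zero_add]
  have hIconj : ∫ t in (0 : ℝ)..T, (starRingEnd ℂ) (D t) * (starRingEnd ℂ) (ew ξ t)
      = (starRingEnd ℂ) I := by
    rw [hI, intervalIntegral.integral_of_le hT.le, intervalIntegral.integral_of_le hT.le,
      ← integral_conj]
    simp only [map_mul]
  have hswap : ∫ x in (0 : ℝ)..T, autocorr D T x * ew ξ x = (T : ℂ)⁻¹ * ((starRingEnd ℂ) I * I) := by
    have e1 : ∀ x, autocorr D T x * ew ξ x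
        = (T : ℂ)⁻¹ * ∫ t in (0 : ℝ)..T, D (x + t) * (starRingEnd ℂ) (D t) * ew ξ x := by
      intro x
      rw [intervalIntegral.integral_mul_const, autocorr, mul_assoc]
    simp only [e1, intervalIntegral.integral_const_mul]
    congr 1
    simp only [intervalIntegral.integral_of_le hT.le (f := fun t => D (_ + t) * _ * _)]
    rw [intervalIntegral_integral_swap]
    · rw [← intervalIntegral.integral_of_le hT.le, ← hIconj,
        ← intervalIntegral.integral_mul_const]
      congr 1
      ext t
      rw [mul_assoc, ← inner t, ← intervalIntegral.integral_const_mul]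
      congr 1
      ext x
      ring
    · rw [Set.uIoc_of_le hT.le]
      refine Integrable.of_bound (C := C * C) ?_ (ae_of_all _ ?_)
      · refine Measurable.aestronglyMeasurable ?_
        refine ((hm.comp (measurable_fst.add measurable_snd)).mul
          (Complex.continuous_conj.measurable.comp (hm.comp measurable_snd))).mul
          ((ew_continuous ξ).measurable.comp measurable_fst)
      · rintro ⟨x, t⟩
        simp only [Function.uncurry, norm_mul, ew_norm, mul_one, RCLike.norm_conj]
        exact mul_le_mul (hC _) (hC _) (norm_nonneg _) ((norm_nonneg _).trans (hC 0))
  rw [hswap]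
  simp only [norm_mul, RCLike.norm_conj]
  ring

/-- Parseval: uniformly small Fourier coefficients make the autocorrelation small in mean
square. -/
lemma integral_autocorr_sq_le {D : ℝ → ℂ} (hm : Measurable D) {C : ℝ} (hC : ∀ x, ‖D x‖ ≤ C)
    {T : ℝ} (hT : 0 < T) (hper : Function.Periodic D T) {η : ℝ}
    (hη : ∀ ξ, ‖∫ x in (0 : ℝ)..T, D x * ew ξ x‖ ≤ η * T) :
    ∫ x in (0 : ℝ)..T, ‖autocorr D T x‖ ^ 2 ≤ η ^ 2 * C ^ 2 * T := by
  have s1 := hasSum_sq_fourierCoeffOn hT (memLp_of_bdd hm.stronglyMeasurable hC T)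
  have s2 := hasSum_sq_fourierCoeffOn hT (memLp_of_bdd (autocorr_measurable hm hT)
    (norm_autocorr_le hC hT) T)
  have hc : ∀ k, ‖fourierCoeffOn hT D k‖ ≤ η := by
    intro k
    rw [fourierCoeffOn_eq_ew, norm_mul, norm_inv, Complex.norm_real, Real.norm_of_nonneg hT.le,
      inv_mul_le_iff₀ hT, mul_comm]
    exact hη _
  have h1 := hasSum_le (fun k => by
    rw [fourierCoeffOn_autocorr hm hC hT hper]
    have : ‖fourierCoeffOn hT D k‖ ^ 2 ≤ η ^ 2 := pow_le_pow_left₀ (norm_nonneg _) (hc k) 2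
    calc (‖fourierCoeffOn hT D k‖ ^ 2) ^ 2
        = ‖fourierCoeffOn hT D k‖ ^ 2 * ‖fourierCoeffOn hT D k‖ ^ 2 := by ring
      _ ≤ η ^ 2 * ‖fourierCoeffOn hT D k‖ ^ 2 := by gcongr) s2 (s1.mul_left (η ^ 2))
  simp only [sub_zero, smul_eq_mul] at h1
  have h2 : ∫ x in (0 : ℝ)..T, ‖D x‖ ^ 2 ≤ C ^ 2 * T := by
    have := intervalIntegral.norm_integral_le_of_norm_le_const (a := 0) (b := T) (C := C ^ 2)
      (f := fun x => ‖D x‖ ^ 2) (fun x _ => by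
        rw [norm_pow, norm_norm]
        exact pow_le_pow_left₀ (norm_nonneg _) (hC x) 2)
    rw [sub_zero, abs_of_pos hT] at this
    exact (le_abs_self _).trans this
  have h3 : T⁻¹ * ∫ x in (0 : ℝ)..T, ‖autocorr D T x‖ ^ 2 ≤ η ^ 2 * C ^ 2 :=
    h1.trans (mul_le_mul_of_nonneg_left
      ((inv_mul_le_iff₀ hT).2 (by rwa [mul_comm T])) (sq_nonneg η))
  rw [inv_mul_le_iff₀ hT] at h3
  linarith

/-! ### Periodization and Bohr's uniqueness theorem -/

/-- The `T`-periodic function agreeing with `d` on `[0, T)`. -/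
def periodize (d : ℝ → ℂ) (T x : ℝ) : ℂ := d (T * Int.fract (x / T))

lemma periodize_periodic (d : ℝ → ℂ) {T : ℝ} (hT : 0 < T) :
    Function.Periodic (periodize d T) T := by
  intro x
  unfold periodize
  rw [add_div, div_self hT.ne', Int.fract_add_one]

lemma periodize_measurable {d : ℝ → ℂ} (hd : Continuous d) (T : ℝ) :
    Measurable (periodize d T) := by
  unfold periodize
  exact hd.measurable.comp ((measurable_fract.comp (measurable_id.div_const T)).const_mul T)

lemma periodize_eq (d : ℝ → ℂ) {T : ℝ} (hT : 0 < T) {x : ℝ} (h0 : 0 ≤ x) (hx : x < T) :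
    periodize d T x = d x := by
  unfold periodize
  rw [Int.fract_eq_self.2 ⟨by positivity, (div_lt_one hT).2 hx⟩]
  congr 1
  field_simp

/-- If `T` is an `ε`-almost period, the periodization stays close to `d` on two periods. -/
lemma norm_periodize_sub_le {d : ℝ → ℂ} {T ε : ℝ} (hT : 0 < T)
    (h : ∀ x, ‖d (x - T) - d x‖ ≤ ε) {x : ℝ} (h0 : 0 ≤ x) (hx : x ≤ 2 * T) :
    ‖periodize d T x - d x‖ ≤ 2 * ε := by
  have hε : 0 ≤ ε := (norm_nonneg _).trans (h 0)
  have hp := periodize_periodic d hT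
  rcases lt_or_ge x T with h1 | h1
  · rw [periodize_eq d hT h0 h1, sub_self, norm_zero]
    positivity
  rcases lt_or_ge x (2 * T) with h2 | h2
  · rw [← hp.sub_eq x, periodize_eq d hT (by linarith) (by linarith)]
    linarith [h x]
  · -- The right endpoint `2 T` has wrapped around twice.
    have e : x = T + T := by linarith
    have e1 : periodize d T x = d (T - T) := by
      rw [e, hp, ← hp.sub_eq T, periodize_eq d hT (by linarith) (by linarith)]
    rw [e1, e]
    have h3 := h T
    have h4 := h (T + T)
    rw [add_sub_cancel_right] at h4
    linarith [norm_sub_le_norm_sub_add_norm_sub (d (T - T)) (d T) (d (T + T))]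

/-- The means of `‖d‖²` over long intervals stay away from zero unless `d = 0`. -/
lemma BohrAP.mean_sq_lower {d : ℝ → ℂ} (hd : BohrAP d) {x₀ : ℝ} (hx₀ : d x₀ ≠ 0) :
    ∃ m T₀, 0 < m ∧ ∀ T, T₀ ≤ T → m * T ≤ ∫ x in (0 : ℝ)..T, ‖d x‖ ^ 2 := by
  have hpos : 0 < ‖d x₀‖ := norm_pos_iff.2 hx₀
  have hdc := hd.1
  obtain ⟨L, δ, hL, hδ, hrec⟩ := hd.recurrence (ε := ‖d x₀‖ / 2) (by positivity)
  refine ⟨(‖d x₀‖ / 2) ^ 2 * δ / (2 * L), 2 * L, by positivity, fun T hT => ?_⟩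
  refine integral_lower (fun x => by positivity) hL hδ (by positivity) hT
    (fun a b => (by fun_prop : Continuous fun x => ‖d x‖ ^ 2).intervalIntegrable _ _) fun a => ?_
  obtain ⟨s, hs1, hs2, hs⟩ := hrec (a - x₀)
  refine ⟨s + x₀, by linarith, by linarith, fun x hx _ _ => ?_⟩
  have h := hs (x - x₀) ⟨by linarith [hx.1], by linarith [hx.2]⟩ x₀
  rw [add_sub_cancel, norm_sub_rev] at h
  have h2 := norm_sub_norm_le (d x₀) (d x)
  gcongr
  linarith

/-- For an almost period `x` of `d`, the autocorrelation of the periodization of `d` at `x` is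
close to the mean of `‖d‖²`. -/
lemma norm_autocorr_sub_le {d : ℝ → ℂ} (hd : Continuous d) {C : ℝ} (hC : ∀ x, ‖d x‖ ≤ C)
    {T ε : ℝ} (hT : 0 < T) (h : ∀ x, ‖d (x - T) - d x‖ ≤ ε) {x : ℝ} (h0 : 0 ≤ x) (hxT : x ≤ T)
    (hx : ∀ t, ‖d (t + x) - d t‖ ≤ ε) :
    T⁻¹ * (∫ t in (0 : ℝ)..T, ‖d t‖ ^ 2) - 5 * ε * C ≤ ‖autocorr (periodize d T) T x‖ := by
  set D := periodize d T with hD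
  have hDC : ∀ x, ‖D x‖ ≤ C := fun x => hC _
  have hDm : Measurable D := periodize_measurable hd T
  have hε : 0 ≤ ε := (norm_nonneg _).trans (h 0)
  have hC0 : 0 ≤ C := (norm_nonneg _).trans (hC 0)
  have hi1 : IntervalIntegrable (fun t => D (x + t) * (starRingEnd ℂ) (D t)) volume 0 T := by
    refine intervalIntegrable_of_bdd (C := C * C) (Measurable.stronglyMeasurable ?_) (fun t => ?_)
      _ _
    · exact (hDm.comp (measurable_id.const_add x)).mul (Complex.continuous_conj.measurable.comp hDm)
    · rw [norm_mul, RCLike.norm_conj]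
      exact mul_le_mul (hDC _) (hDC _) (norm_nonneg _) hC0
  have hconj := Complex.continuous_conj
  have hi2 : IntervalIntegrable (fun t => d t * (starRingEnd ℂ) (d t)) volume 0 T :=
    (hd.mul (hconj.comp hd)).intervalIntegrable _ _
  have hb : ‖∫ t in (0 : ℝ)..T, (D (x + t) * (starRingEnd ℂ) (D t)
      - d t * (starRingEnd ℂ) (d t))‖ ≤ 5 * ε * C * |T - 0| := by
    refine intervalIntegral.norm_integral_le_of_norm_le_const fun t ht => ?_
    rw [Set.uIoc_of_le hT.le] at ht
    have h1 : ‖D (x + t) - d (x + t)‖ ≤ 2 * ε :=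
      norm_periodize_sub_le hT h (by linarith [ht.1]) (by linarith [ht.2])
    have h2 : ‖D t - d t‖ ≤ 2 * ε :=
      norm_periodize_sub_le hT h ht.1.le (by linarith [ht.2])
    have h3 : ‖D (x + t) - d t‖ ≤ 3 * ε := by
      have := hx t
      rw [add_comm t x] at this
      linarith [norm_sub_le_norm_sub_add_norm_sub (D (x + t)) (d (x + t)) (d t)]
    have e : D (x + t) * (starRingEnd ℂ) (D t) - d t * (starRingEnd ℂ) (d t)
        = (D (x + t) - d t) * (starRingEnd ℂ) (D t) + d t * (starRingEnd ℂ) (D t - d t) := by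
      rw [map_sub]
      ring
    rw [e]
    refine (norm_add_le _ _).trans ?_
    rw [norm_mul, norm_mul, RCLike.norm_conj, RCLike.norm_conj]
    have h4 : ‖D (x + t) - d t‖ * ‖D t‖ ≤ 3 * ε * C :=
      mul_le_mul h3 (hDC _) (norm_nonneg _) (by positivity)
    have h5 : ‖d t‖ * ‖D t - d t‖ ≤ C * (2 * ε) :=
      mul_le_mul (hC _) h2 (norm_nonneg _) hC0
    linarith
  rw [intervalIntegral.integral_sub hi1 hi2, sub_zero, abs_of_pos hT] at hb
  have e2 : ∫ t in (0 : ℝ)..T, d t * (starRingEnd ℂ) (d t)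
      = ((∫ t in (0 : ℝ)..T, ‖d t‖ ^ 2 : ℝ) : ℂ) := by
    rw [← intervalIntegral.integral_ofReal]
    congr 1
    ext t
    rw [Complex.mul_conj, Complex.normSq_eq_norm_sq]
  have hnn : 0 ≤ ∫ t in (0 : ℝ)..T, ‖d t‖ ^ 2 :=
    intervalIntegral.integral_nonneg hT.le fun t _ => by positivity
  rw [e2] at hb
  have h6 := norm_sub_norm_le ((∫ t in (0 : ℝ)..T, ‖d t‖ ^ 2 : ℝ) : ℂ)
    (∫ t in (0 : ℝ)..T, D (x + t) * (starRingEnd ℂ) (D t))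
  rw [norm_sub_rev, Complex.norm_real, Real.norm_of_nonneg hnn] at h6
  unfold autocorr
  rw [norm_mul, norm_inv, Complex.norm_real, Real.norm_of_nonneg hT.le]
  have h7 : T * (T⁻¹ * (∫ t in (0 : ℝ)..T, ‖d t‖ ^ 2) - 5 * ε * C)
      ≤ ‖∫ t in (0 : ℝ)..T, D (x + t) * (starRingEnd ℂ) (D t)‖ := by
    rw [mul_sub, mul_inv_cancel_left₀ hT.ne']
    linarith
  rwa [le_inv_mul_iff₀ hT]

/-- Bohr's uniqueness theorem: an almost periodic function without frequencies is zero. -/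
theorem BohrAP.eq_zero {d : ℝ → ℂ} (hd : BohrAP d) (h0 : ∀ ξ, HasFourierCoeff d ξ 0) (x₀ : ℝ) :
    d x₀ = 0 := by
  by_contra hx₀
  obtain ⟨C, hC0, hC⟩ := hd.exists_bound
  obtain ⟨m, T₁, hm, hmean⟩ := hd.mean_sq_lower hx₀
  -- This `ε` keeps the autocorrelation above `m / 2` at every `ε`-almost period.
  set ε := m / (10 * C) with hε
  have hεpos : 0 < ε := by positivity
  obtain ⟨L, δ, hL, hδ, hrec⟩ := hd.recurrence hεpos
  set κ := (m / 2) ^ 2 * δ / (2 * L) with hκ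
  have hκpos : 0 < κ := by positivity
  set η := Real.sqrt κ / (2 * C) with hη
  obtain ⟨T₂, hT₂⟩ := small_uniform hd h0 (η := η) (by positivity)
  obtain ⟨l, hl, hper⟩ := hd.2 ε hεpos
  obtain ⟨T, hTmem, hT⟩ := hper (max (max T₁ T₂) (2 * L))
  have hT1 : T₁ ≤ T := ((le_max_left _ _).trans (le_max_left _ _)).trans hTmem.1
  have hT2 : T₂ ≤ T := ((le_max_right _ _).trans (le_max_left _ _)).trans hTmem.1
  have hTL : 2 * L ≤ T := (le_max_right _ _).trans hTmem.1
  have hTpos : 0 < T := by linarith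
  have hDm := periodize_measurable hd.1 T
  have hDC : ∀ x, ‖periodize d T x‖ ≤ C := fun x => hC _
  have upper := integral_autocorr_sq_le hDm hDC hTpos (periodize_periodic d hTpos) (η := η) (by
    intro ξ
    have e : ∫ x in (0 : ℝ)..T, periodize d T x * ew ξ x = ∫ x in (0 : ℝ)..T, d x * ew ξ x := by
      rw [intervalIntegral.integral_of_le hTpos.le, intervalIntegral.integral_of_le hTpos.le,
        integral_Ioc_eq_integral_Ioo, integral_Ioc_eq_integral_Ioo]
      refine setIntegral_congr_fun measurableSet_Ioo fun x hx => ?_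
      simp only [periodize_eq d hTpos hx.1.le hx.2]
    rw [e]
    exact hT₂ T hT2 ξ)
  have hvm := autocorr_measurable hDm hTpos
  have lower : κ * T ≤ ∫ x in (0 : ℝ)..T, ‖autocorr (periodize d T) T x‖ ^ 2 := by
    refine integral_lower (fun x => by positivity) hL hδ (by positivity) hTL (fun a b => ?_)
      fun a => ?_
    · refine intervalIntegrable_of_bdd (C := (C * C) ^ 2)
        (Measurable.stronglyMeasurable (hvm.measurable.norm.pow_const 2)) (fun x => ?_) _ _
      rw [norm_pow, norm_norm]
      exact pow_le_pow_left₀ (norm_nonneg _) (norm_autocorr_le hDC hTpos x) 2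
    · obtain ⟨s, hs1, hs2, hs⟩ := hrec a
      refine ⟨s, hs1, hs2, fun x hx hx0 hxT => ?_⟩
      have h1 := norm_autocorr_sub_le hd.1 hC hTpos (fun x => (hT x).le) hx0 hxT (hs x hx)
      have h2 : m ≤ T⁻¹ * ∫ t in (0 : ℝ)..T, ‖d t‖ ^ 2 := by
        rw [← div_eq_inv_mul, le_div_iff₀ hTpos]
        exact hmean T hT1
      have h3 : 5 * ε * C = m / 2 := by rw [hε]; field_simp; norm_num
      gcongr
      linarith
  have h5 : η ^ 2 * C ^ 2 = κ / 4 := by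
    rw [hη, div_pow, Real.sq_sqrt hκpos.le]
    field_simp
    norm_num
  rw [h5] at upper
  nlinarith

/-! ### Characterization of limit periodicity -/

/-- A function in the hull of `f` with the same Fourier coefficients as `f` equals `f`. -/
lemma eq_of_mem_hull {F h : ℝ →ᵇ ℂ} (hF : BohrAP F)
    (hh : h ∈ closure (convexHull ℝ (Set.range (trB F))))
    (hc : ∀ ω, ∃ c, HasFourierCoeff F ω c ∧ HasFourierCoeff h ω c) : h = F := by
  -- Every almost period of `F` is one of `h`, so `F - h` is almost periodic.
  have hd : BohrAP fun x => F x - h x := by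
    refine ⟨F.continuous.sub h.continuous, fun ε hε => ?_⟩
    obtain ⟨L, hL, hper⟩ := hF.2 (ε / 3) (by positivity)
    refine ⟨L, hL, fun a => ?_⟩
    obtain ⟨τ, hτ, hx⟩ := hper a
    refine ⟨τ, hτ, fun x => ?_⟩
    have hsub : Set.range (trB F) ⊆ {g : ℝ →ᵇ ℂ | ∀ x, ‖g (x - τ) - g x‖ ≤ ε / 3} := by
      rintro _ ⟨t, rfl⟩ x
      have := (hx (x + t)).le
      rwa [show x + t - τ = x - τ + t by ring] at this
    have h1 := closure_convexHull_subset hsub (convex_almostPeriod _ _)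
      (isClosed_almostPeriod _ _) hh x
    have h2 := hx x
    have e : F (x - τ) - h (x - τ) - (F x - h x)
        = (F (x - τ) - F x) - (h (x - τ) - h x) := by ring
    rw [e]
    linarith [norm_sub_le (F (x - τ) - F x) (h (x - τ) - h x)]
  have h0 : ∀ ξ, HasFourierCoeff (fun x => F x - h x) ξ 0 := by
    intro ξ
    obtain ⟨c, h1, h2⟩ := hc ξ
    simpa [sub_eq_add_neg] using h1.linear F.continuous h.continuous h2 1 (-1)
  ext x
  exact (sub_eq_zero.1 (hd.eq_zero h0 x)).symm

/-- If all frequencies of `f` lie in `ℚω` with `ω ≠ 0`, then `f` is limit periodic: the averages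
of `f` along `(k! / ω)ℤ` retain more and more of the frequencies as `k` grows. -/
lemma limitPeriodic_of_base {f : ℝ → ℂ} (hf : BohrAP f) {Fhat : ℝ → ℂ}
    (hF : ∀ ω : ℝ, HasFourierCoeff f ω (Fhat ω)) {ω : ℝ} (hω : ω ≠ 0)
    (hbase : ∀ ω' : ℝ, Fhat ω' ≠ 0 → ∃ q : ℚ, ω' = (q : ℝ) * ω) : LimitPeriodic f := by
  obtain ⟨C, hC0, hC⟩ := hf.exists_bound
  set F : ℝ →ᵇ ℂ := BoundedContinuousFunction.ofNormedAddCommGroup f hf.1 C hC with hFdef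
  have hFf : (F : ℝ → ℂ) = f := rfl
  have hFap : BohrAP F := hf
  set P : ℕ → ℝ := fun k => (k.factorial : ℝ) / |ω| with hP
  have hPpos : ∀ k, 0 < P k := fun k => by positivity
  choose h hmem hper using fun k => exists_periodic_mem_hull hFap (P k)
  have hmem' : ∀ k, h k ∈ closure (convexHull ℝ (Set.range (trB F))) := fun k =>
    closure_mono (convexHull_mono (by rintro _ ⟨m, rfl⟩; exact ⟨_, rfl⟩)) (hmem k)
  have hcoeff : ∀ ω', ∀ᶠ k in atTop, HasFourierCoeff (h k) ω' (Fhat ω') := by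
    intro ω'
    have hmain : ∀ k, (∀ m : ℕ, ew ω' (-(m * P k)) * Fhat ω' = Fhat ω') →
        HasFourierCoeff (h k) ω' (Fhat ω') := by
      intro k hk
      refine closure_convexHull_subset ?_ (convex_coeff ω' _) (isClosed_coeff ω' _) (hmem k)
      rintro _ ⟨m, rfl⟩
      have := (hF ω').translate hf.1 hC (m * P k)
      rw [hk m] at this
      exact this
    by_cases h0 : Fhat ω' = 0
    · exact Eventually.of_forall fun k => hmain k fun m => by rw [h0, mul_zero]
    · obtain ⟨q, hq⟩ := hbase ω' h0
      filter_upwards [eventually_ge_atTop q.den] with k hk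
      refine hmain k fun m => ?_
      -- `ω' * P k = ± q * k!` is an integer because `q.den ∣ k!`.
      obtain ⟨r, hr⟩ := Nat.dvd_factorial q.pos hk
      have hqr : (q : ℝ) * (k.factorial : ℝ) = q.num * r := by
        have hden : (q.den : ℝ) ≠ 0 := by exact_mod_cast q.den_nz
        rw [hr, Rat.cast_def]
        push_cast
        field_simp
      have hPint : ew ω' (-(m * P k)) = 1 := by
        rw [ew_eq_one_iff]
        rcases abs_choice ω with ha | ha
        · refine ⟨-(m * (q.num * r)), ?_⟩
          push_cast
          rw [← hqr, hq, hP]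
          simp only [ha]
          field_simp
        · refine ⟨m * (q.num * r), ?_⟩
          push_cast
          rw [← hqr, hq, hP]
          simp only [ha]
          field_simp
      rw [hPint, one_mul]
  obtain ⟨g, hg, φ, hφ, hlim⟩ :=
    (isCompact_closure_convexHull_range_trB hFap).tendsto_subseq hmem'
  have hgF : g = F := eq_of_mem_hull hFap hg fun ω' => ⟨Fhat ω', hF ω',
    (isClosed_coeff ω' (Fhat ω')).mem_of_tendsto hlim (hφ.tendsto_atTop.eventually (hcoeff ω'))⟩
  rw [hgF] at hlim
  refine ⟨fun j => h (φ j), fun j => (h (φ j)).continuous,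
    fun j => ⟨P (φ j), hPpos _, hper _⟩, ?_⟩
  exact BoundedContinuousFunction.tendsto_iff_tendstoUniformly.1 hlim

/-- a Bohr almost periodic function is limit periodic iff all of its
frequencies are rational multiples of a single real number. -/
theorem limitPeriodic_iff_one_term_basis (f : ℝ → ℂ) (hf : BohrAP f) (Fhat : ℝ → ℂ)
    (hFhat : ∀ ω : ℝ, HasFourierCoeff f ω (Fhat ω)) :
    LimitPeriodic f ↔
      ∃ ω : ℝ, ∀ ω' : ℝ, Fhat ω' ≠ 0 → ∃ q : ℚ, ω' = (q : ℝ) * ω := by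
  refine ⟨fun h => h.exists_base hf.1 hFhat, ?_⟩
  rintro ⟨ω, hω⟩
  rcases eq_or_ne ω 0 with rfl | h0
  · refine limitPeriodic_of_base hf hFhat one_ne_zero fun ω' h => ⟨0, ?_⟩
    obtain ⟨q, hq⟩ := hω ω' h
    simpa using hq
  · exact limitPeriodic_of_base hf hFhat h0 hω
end
end
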